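/- Let X be a tree and let f : X → X be a continuous map with zero topological entropy. Then every infinite ω-limit set ω_f(x) of f is contained in the orbit Orb_f(I) = I ∪ f(I) ∪ … ∪ f^{s-1}(I) of some periodic arc I of f of period s. -/

import Mathlib

open Set Filter Topology Function
open scoped ENNReal

/-- A subset of a topological space is an *arc* if it is homeomorphic to `[0,1]`. -/
def IsArc {X : Type*} [TopologicalSpace X] (A : Set X) : Prop :=
  Nonempty (A ≃ₜ Set.Icc (0 : ℝ) 1)

/-- A point `p` is an *endpoint* of the arc `A` if `p ∈ A` and `A \ {p}` is connected. -/
def IsArcEndpoint {X : Type*} [TopologicalSpace X] (A : Set X) (p : X) : Prop :=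
  p ∈ A ∧ IsConnected (A \ {p})

/-- A subset is a *simple closed curve* if it is homeomorphic to the unit circle. -/
def IsSimpleClosedCurve {X : Type*} [TopologicalSpace X] (S : Set X) : Prop :=
  Nonempty (S ≃ₜ Metric.sphere (0 : ℂ) 1)

/-- A *tree* is a compact connected metric space which is a union of finitely many arcs,
any two of which are disjoint or intersect only in (one or both of) their endpoints,
and which contains no simple closed curve. -/
def IsTree (X : Type*) [MetricSpace X] : Prop :=
  CompactSpace X ∧ ConnectedSpace X ∧
    (∃ 𝒜 : Finset (Set X), (∀ A ∈ 𝒜, IsArc A) ∧ ⋃₀ (𝒜 : Set (Set X)) = Set.univ ∧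
      ∀ A ∈ 𝒜, ∀ B ∈ 𝒜, A ≠ B → ∀ p ∈ A ∩ B, IsArcEndpoint A p ∧ IsArcEndpoint B p) ∧
    ∀ S : Set X, ¬ IsSimpleClosedCurve S

/-- A *dendrite* is a locally connected continuum containing no simple closed curve. -/
def IsDendrite (X : Type*) [MetricSpace X] : Prop :=
  CompactSpace X ∧ ConnectedSpace X ∧ LocallyConnectedSpace X ∧
    ∀ S : Set X, ¬ IsSimpleClosedCurve S

/-- `𝒰` is a finite open cover of the subset `Y`. -/
def IsOpenCoverOn {X : Type*} [TopologicalSpace X] (Y : Set X) (𝒰 : Finset (Set X)) : Prop :=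
  (∀ U ∈ 𝒰, IsOpen U) ∧ Y ⊆ ⋃₀ (𝒰 : Set (Set X))

/-- `N(⋁_{i=1}^n f^{-a_i}(𝒰))`, relative to the subset `Y`: the minimal number `m` of elements
of the join cover `⋁_{i=1}^n f^{-a_i}(𝒰)` needed to cover `Y`. -/
noncomputable def seqCoverCountOn {X : Type*} (f : X → X) (Y : Set X) (a : ℕ → ℕ)
    (𝒰 : Finset (Set X)) (n : ℕ) : ℕ :=
  sInf { m | ∃ c : Fin m → Fin n → Set X, (∀ j i, c j i ∈ 𝒰) ∧
    Y ⊆ ⋃ j, ⋂ i, f^[a i.1] ⁻¹' c j i }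

/-- Topological sequence entropy of `f` restricted to the (invariant) subset `Y`,
with respect to the sequence `a`. -/
noncomputable def seqEntropyOn {X : Type*} [TopologicalSpace X] (f : X → X) (Y : Set X)
    (a : ℕ → ℕ) : ℝ≥0∞ :=
  ⨆ (𝒰 : Finset (Set X)) (_ : IsOpenCoverOn Y 𝒰),
    Filter.limsup
      (fun n : ℕ => ENNReal.ofReal (Real.log (seqCoverCountOn f Y a 𝒰 n) / n)) Filter.atTop

/-- Topological sequence entropy of `f : X → X` with respect to the sequence `a`. -/
noncomputable def seqEntropy {X : Type*} [TopologicalSpace X] (f : X → X) (a : ℕ → ℕ) : ℝ≥0∞ :=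
  seqEntropyOn f Set.univ a

/-- The ordinary topological entropy `h(f)`, i.e. the sequence entropy for `A = (0,1,2,…)`. -/
noncomputable def topEntropy {X : Type*} [TopologicalSpace X] (f : X → X) : ℝ≥0∞ :=
  seqEntropy f id

/-- `h_∞(f|_Y)`: the supremum over all strictly increasing sequences of positive integers of
the topological sequence entropies of `f` restricted to `Y`. -/
noncomputable def supSeqEntropyOn {X : Type*} [TopologicalSpace X] (f : X → X) (Y : Set X) :
    ℝ≥0∞ :=
  ⨆ (a : ℕ → ℕ) (_ : StrictMono a) (_ : 1 ≤ a 0), seqEntropyOn f Y a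

/-- `h_∞(f)`: the supremum of the topological sequence entropies of `f`. -/
noncomputable def supSeqEntropy {X : Type*} [TopologicalSpace X] (f : X → X) : ℝ≥0∞ :=
  supSeqEntropyOn f Set.univ

/-- The ω-limit set `ω_f(x) = ⋂_n closure {f^k(x) : k ≥ n}`. -/
def omegaLimitSet {X : Type*} [TopologicalSpace X] (f : X → X) (x : X) : Set X :=
  ⋂ n : ℕ, closure ((fun k => f^[k] x) '' Set.Ici n)

/-- `ω(f) = ⋃_x ω_f(x)`. -/
def omegaSet {X : Type*} [TopologicalSpace X] (f : X → X) : Set X :=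
  ⋃ x : X, omegaLimitSet f x

/-- The non-wandering set `Ω(f)`. -/
def nonWanderingSet {X : Type*} [TopologicalSpace X] (f : X → X) : Set X :=
  { x | ∀ U : Set X, IsOpen U → x ∈ U → ∃ n, 1 ≤ n ∧ (f^[n] ⁻¹' U ∩ U).Nonempty }

/-- There is an ε-chain from `x` to `y` under `f`. -/
def EpsChain {X : Type*} [MetricSpace X] (f : X → X) (ε : ℝ) (x y : X) : Prop :=
  ∃ n, 1 ≤ n ∧ ∃ c : ℕ → X, c 0 = x ∧ c n = y ∧ ∀ i < n, dist (f (c i)) (c (i + 1)) < ε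

/-- The chain recurrent set `CR(f)`. -/
def chainRecurrentSet {X : Type*} [MetricSpace X] (f : X → X) : Set X :=
  { x | ∀ ε > 0, EpsChain f ε x x }

/-- The chain recurrent set of the restriction `f|_Y`: chain recurrence witnessed by
ε-chains lying entirely inside `Y`. -/
def chainRecurrentSetOn {X : Type*} [MetricSpace X] (f : X → X) (Y : Set X) : Set X :=
  { x ∈ Y | ∀ ε > 0, ∃ n, 1 ≤ n ∧ ∃ c : ℕ → X, c 0 = x ∧ c n = x ∧
      (∀ i ≤ n, c i ∈ Y) ∧ ∀ i < n, dist (f (c i)) (c (i + 1)) < ε }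

/-- `I` is a periodic arc of `f` of period `s`: an arc with `f^s(I) ⊆ I` whose iterates
`I, f(I), …, f^{s-1}(I)` are pairwise disjoint. -/
def IsPeriodicArc {X : Type*} [TopologicalSpace X] (f : X → X) (I : Set X) (s : ℕ) : Prop :=
  IsArc I ∧ 1 ≤ s ∧ Set.MapsTo f^[s] I I ∧
    ∀ i j, i < j → j < s → Disjoint (f^[i] '' I) (f^[j] '' I)

/-- `Orb_f(I) = I ∪ f(I) ∪ … ∪ f^{s-1}(I)`. -/
def arcOrbit {X : Type*} (f : X → X) (I : Set X) (s : ℕ) : Set X :=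
  ⋃ i ∈ Finset.range s, f^[i] '' I

/-- `I` is an independence set for the pair `(U, V)` under `f`. -/
def IsIndepSetPair {X : Type*} (f : X → X) (U V : Set X) (I : Finset ℕ) : Prop :=
  ∀ J ⊆ I, J.Nonempty → ∀ s : ℕ → Bool,
    (⋂ j ∈ J, f^[j] ⁻¹' (if s j then U else V)).Nonempty

/-- `(x, y)` is an IN-pair of `(X, f)`. -/
def INPair {X : Type*} [TopologicalSpace X] (f : X → X) (x y : X) : Prop :=
  ∀ U ∈ nhds x, ∀ V ∈ nhds y, ∀ m : ℕ, ∃ I : Finset ℕ, m ≤ I.card ∧ IsIndepSetPair f U V I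

/-- The set `IN(X, f)` of IN-pairs of `(X, f)`. -/
def INPairs {X : Type*} [TopologicalSpace X] (f : X → X) : Set (X × X) :=
  { p | INPair f p.1 p.2 }

/-- `(x, y)` is an IN-pair of the restricted (sub)system `(Y, f|_Y)`, for `Y` invariant. -/
def INPairOn {X : Type*} [TopologicalSpace X] (f : X → X) (Y : Set X) (x y : X) : Prop :=
  x ∈ Y ∧ y ∈ Y ∧ ∀ U ∈ nhds x, ∀ V ∈ nhds y, ∀ m : ℕ, ∃ I : Finset ℕ, m ≤ I.card ∧
    ∀ J ⊆ I, J.Nonempty → ∀ s : ℕ → Bool,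
      (Y ∩ ⋂ j ∈ J, f^[j] ⁻¹' (if s j then U else V)).Nonempty

/-- `(x, y)` is a Li–Yorke pair for `f`. -/
def LiYorkePair {X : Type*} [MetricSpace X] (f : X → X) (x y : X) : Prop :=
  Filter.liminf (fun n : ℕ => dist (f^[n] x) (f^[n] y)) Filter.atTop = 0 ∧
    0 < Filter.limsup (fun n : ℕ => dist (f^[n] x) (f^[n] y)) Filter.atTop

/-!
An infinite ω-limit set of a forest has infinitely many points on one of the finitely many arcs.
Since there is no simple closed curve, the interior of that arc separates its ends from each other
in the whole space, so the coordinate along the arc extends to a continuous retraction onto it, and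
a connected set cannot get from one point of the arc to another without covering what lies between.
Subarcs that cover each other under iterates of `f` therefore give a horseshoe, and a horseshoe
gives positive entropy.

If there is no horseshoe, then between limit points on the arc there are periodic points, and the
ends of some subarc between limit points are never reached from the inside of a smaller one. The
closure of the orbit of the small subarc is an invariant set that avoids these ends; its connected
component in the middle is a periodic arc, and it catches the orbit whose limit set we consider.
-/

section Horseshoe

variable {X : Type*}

theorem subset_image_iterate_mul {f : X → X} {A C : Set X} {n k : ℕ} (hAC : A ⊆ C)
    (hC : C ⊆ f^[n] '' A) (hk : 0 < k) : C ⊆ f^[n * k] '' A := by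
  induction k, hk using Nat.le_induction with
  | base => simpa using hC
  | succ k _ ih =>
    calc C ⊆ f^[n * k] '' A := ih
      _ ⊆ f^[n * k] '' (f^[n] '' A) := image_mono (hAC.trans hC)
      _ = f^[n * (k + 1)] '' A := by rw [← image_comp, ← iterate_add, Nat.mul_succ]

theorem exists_itinerary {ι : Type*} {g : X → X} {S : ι → Set X} (hne : ∀ i, (S i).Nonempty)
    (hS : ∀ i j, S i ⊆ g '' S j) (k : ℕ) (w : ℕ → ι) : ∃ y, ∀ i ≤ k, g^[i] y ∈ S (w i) := by
  induction k generalizing w with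
  | zero =>
    obtain ⟨y, hy⟩ := hne (w 0)
    exact ⟨y, fun i hi => by rwa [Nat.le_zero.1 hi]⟩
  | succ k ih =>
    obtain ⟨y, hy⟩ := ih fun i => w (i + 1)
    obtain ⟨z, hz, rfl⟩ := hS (w 1) (w 0) (hy 0 k.zero_le)
    refine ⟨z, fun i hi => ?_⟩
    rcases i with _ | i
    · exact hz
    · exact hy i (Nat.succ_le_succ_iff.1 hi)

theorem exists_cover_seqCoverCountOn (f : X → X) (Y : Set X) (a : ℕ → ℕ) {𝒰 : Finset (Set X)}
    (h𝒰 : ⋃₀ (𝒰 : Set (Set X)) = univ) (n : ℕ) :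
    ∃ c : Fin (seqCoverCountOn f Y a 𝒰 n) → Fin n → Set X, (∀ j i, c j i ∈ 𝒰) ∧
      Y ⊆ ⋃ j, ⋂ i, f^[a i.1] ⁻¹' c j i := by
  have hne : { m | ∃ c : Fin m → Fin n → Set X, (∀ j i, c j i ∈ 𝒰) ∧
      Y ⊆ ⋃ j, ⋂ i, f^[a i.1] ⁻¹' c j i }.Nonempty := by
    let E := Fintype.equivFin (Fin n → 𝒰)
    refine ⟨_, fun j i => E.symm j i, fun j i => (E.symm j i).2, fun y _ => ?_⟩
    have hmem (i : Fin n) : ∃ U : 𝒰, f^[a i.1] y ∈ (U : Set X) := by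
      obtain ⟨U, hU, hyU⟩ := h𝒰.ge (mem_univ (f^[a i.1] y))
      exact ⟨⟨U, hU⟩, hyU⟩
    choose U hU using hmem
    exact mem_iUnion.2 ⟨E U, mem_iInter.2 fun i => by simpa using hU i⟩
  exact Nat.sInf_mem hne

open scoped Classical in
theorem two_pow_card_le_seqCoverCountOn {f : X → X} {A B : Set X} {I : Finset ℕ} {n : ℕ}
    (hI : IsIndepSetPair f A B I) (hAB : Disjoint A B) (hne : I.Nonempty)
    (hIn : I ⊆ Finset.range n) :
    2 ^ I.card ≤ seqCoverCountOn f univ id {Aᶜ, Bᶜ} n := by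
  obtain ⟨c, hc, hcov⟩ := exists_cover_seqCoverCountOn f univ id (𝒰 := {Aᶜ, Bᶜ})
    (by simpa [← compl_inter] using hAB.inter_eq) n
  have hcode (J : Finset ℕ) : ∃ j, ∀ i : Fin n, i.1 ∈ I →
      ((i.1 ∈ J ↔ c j i = Bᶜ)) := by
    obtain ⟨y, hy⟩ := hI I Subset.rfl hne fun i => decide (i ∈ J)
    obtain ⟨j, hj⟩ := mem_iUnion.1 (hcov (mem_univ y))
    refine ⟨j, fun i hi => ?_⟩
    have hyi := mem_iInter₂.1 hy i.1 hi
    have hci := mem_iInter.1 hj i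
    have hci' := hc j i
    simp only [Finset.mem_insert, Finset.mem_singleton] at hci'
    by_cases hiJ : i.1 ∈ J
    · have : c j i ≠ Aᶜ := fun h => by simp_all
      simp_all
    · have : c j i ≠ Bᶜ := fun h => by simp_all
      simp_all
  choose code hcode using hcode
  have hinj : InjOn code I.powerset := by
    intro J hJ K hK hJK
    have hsub : J ⊆ I ∧ K ⊆ I := by simpa using And.intro hJ hK
    ext i
    by_cases hi : i ∈ I
    · have hin := Finset.mem_range.1 (hIn hi)
      rw [hcode J ⟨i, hin⟩ hi, hJK, ← hcode K ⟨i, hin⟩ hi]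
    · exact iff_of_false (fun h => hi (hsub.1 h)) fun h => hi (hsub.2 h)
  simpa using Finset.card_le_card_of_injOn code (fun _ _ => Finset.mem_univ _) hinj

theorem IsIndepSetPair.of_subset_image {f : X → X} {A B : Set X} {L : ℕ} (hne : A.Nonempty)
    (hfA : A ∪ B ⊆ f^[L] '' A) (hfB : A ∪ B ⊆ f^[L] '' B) (k : ℕ) :
    IsIndepSetPair f A B ((Finset.range k).image (L * ·)) := by
  intro J hJ _ s
  have hS (b : Bool) : (if b then A else B) ⊆ A ∪ B := by
    cases b
    · exact subset_union_right
    · exact subset_union_left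
  obtain ⟨y, hy⟩ := exists_itinerary (g := f^[L]) (S := fun b : Bool => if b then A else B)
    (Bool.forall_bool.2 ⟨(hne.mono (subset_union_left.trans hfB)).of_image, hne⟩)
    (fun b => Bool.forall_bool.2 ⟨(hS b).trans hfB, (hS b).trans hfA⟩) k fun i => s (L * i)
  refine ⟨y, mem_iInter₂.2 fun j hj => ?_⟩
  obtain ⟨i, hi, rfl⟩ := Finset.mem_image.1 (hJ hj)
  simpa only [mem_preimage, iterate_mul] using hy i (Finset.mem_range.1 hi).le

variable [TopologicalSpace X]

/-- `f` has a horseshoe if, for some iterate `f^n`, each of two disjoint nonempty closed sets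
covers both of them. This is the only way in which positive entropy enters the argument. -/
def HasHorseshoe (f : X → X) : Prop :=
  ∃ (A B : Set X) (n : ℕ), IsClosed A ∧ IsClosed B ∧ Disjoint A B ∧ A.Nonempty ∧ 0 < n ∧
    A ∪ B ⊆ f^[n] '' A ∧ A ∪ B ⊆ f^[n] '' B

theorem HasHorseshoe.of_subset_image {f : X → X} {A B : Set X} {n m : ℕ} (hA : IsClosed A)
    (hB : IsClosed B) (hAB : Disjoint A B) (hne : A.Nonempty) (hn : 0 < n) (hm : 0 < m)
    (hfA : A ∪ B ⊆ f^[n] '' A) (hfB : A ∪ B ⊆ f^[m] '' B) : HasHorseshoe f :=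
  ⟨A, B, n * m, hA, hB, hAB, hne, Nat.mul_pos hn hm,
    subset_image_iterate_mul subset_union_left hfA hm,
    Nat.mul_comm m n ▸ subset_image_iterate_mul subset_union_right hfB hn⟩

theorem HasHorseshoe.of_iterate {f : X → X} {M : ℕ} (hM : 0 < M) (h : HasHorseshoe f^[M]) :
    HasHorseshoe f := by
  obtain ⟨A, B, n, hA, hB, hAB, hne, hn, hfA, hfB⟩ := h
  rw [← iterate_mul] at hfA hfB
  exact ⟨A, B, M * n, hA, hB, hAB, hne, Nat.mul_pos hM hn, hfA, hfB⟩

theorem HasHorseshoe.topEntropy_pos {f : X → X} (h : HasHorseshoe f) : 0 < topEntropy f := by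
  classical
  obtain ⟨A, B, L, hA, hB, hAB, hne, hL, hfA, hfB⟩ := h
  have hcount (k : ℕ) : 2 ^ (k + 1) ≤ seqCoverCountOn f univ id {Aᶜ, Bᶜ} (L * (k + 1)) := by
    have hsub : (Finset.range (k + 1)).image (L * ·) ⊆ Finset.range (L * (k + 1)) := by
      intro i hi
      obtain ⟨j, hj, rfl⟩ := Finset.mem_image.1 hi
      exact Finset.mem_range.2 (Nat.mul_lt_mul_of_pos_left (Finset.mem_range.1 hj) hL)
    simpa [Finset.card_image_of_injective _ fun _ _ => Nat.eq_of_mul_eq_mul_left hL] using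
      two_pow_card_le_seqCoverCountOn (.of_subset_image hne hfA hfB (k + 1)) hAB (by simp) hsub
  have hLr : (0 : ℝ) < L := by exact_mod_cast hL
  have hlim : ENNReal.ofReal (Real.log 2 / L) ≤ limsup (fun n : ℕ =>
      ENNReal.ofReal (Real.log (seqCoverCountOn f univ id {Aᶜ, Bᶜ} n) / n)) atTop := by
    refine le_limsup_of_frequently_le' (frequently_atTop.2 fun k => ⟨L * (k + 1), by nlinarith,
      ENNReal.ofReal_le_ofReal ?_⟩)
    have hlog : (k + 1 : ℕ) * Real.log 2 ≤
        Real.log (seqCoverCountOn f univ id {Aᶜ, Bᶜ} (L * (k + 1))) := by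
      rw [← Real.log_pow]
      exact Real.log_le_log (by positivity) (by exact_mod_cast hcount k)
    rw [div_le_div_iff₀ hLr (by positivity)]
    push_cast at hlog ⊢
    nlinarith
  have hcov : IsOpenCoverOn univ ({Aᶜ, Bᶜ} : Finset (Set X)) :=
    ⟨by simp [hA.isOpen_compl, hB.isOpen_compl],
      by simp [← compl_inter, hAB.inter_eq]⟩
  calc 0 < ENNReal.ofReal (Real.log 2 / L) :=
        ENNReal.ofReal_pos.2 (div_pos (Real.log_pos one_lt_two) hLr)
    _ ≤ _ := hlim
    _ ≤ topEntropy f := le_iSup₂_of_le (f := fun (𝒰 : Finset (Set X)) (_ : IsOpenCoverOn univ 𝒰) =>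
        limsup (fun n : ℕ => ENNReal.ofReal (Real.log (seqCoverCountOn f univ id 𝒰 n) / n)) atTop)
        {Aᶜ, Bᶜ} hcov le_rfl

end Horseshoe

section OmegaLimitSet

variable {X Y : Type*} [TopologicalSpace X] [TopologicalSpace Y] {f : X → X} {x : X} {U : Set X}

theorem mem_omegaLimitSet_iff {y : X} :
    y ∈ omegaLimitSet f x ↔ MapClusterPt y atTop fun n => f^[n] x := by
  rw [omegaLimitSet, mem_iInter, MapClusterPt, (atTop_basis.map _).clusterPt_iff_forall_mem_closure]
  simp only [true_imp_iff]

theorem exists_iterate_mem_of_inter_omegaLimitSet_nonempty (hU : IsOpen U)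
    (h : (U ∩ omegaLimitSet f x).Nonempty) (N : ℕ) : ∃ t ≥ N, f^[t] x ∈ U := by
  obtain ⟨y, hyU, hy⟩ := h
  exact ((mem_omegaLimitSet_iff.1 hy).frequently (hU.mem_nhds hyU)).forall_exists_of_atTop N

theorem omegaLimitSet_subset_closure {Q : Set X} (hQ : MapsTo f Q Q) (hx : x ∈ Q) :
    omegaLimitSet f x ⊆ closure Q := by
  refine iInter_subset_of_subset 0 (closure_mono ?_)
  rintro _ ⟨n, -, rfl⟩
  exact hQ.iterate n hx

theorem omegaLimitSet_iterate_apply (f : X → X) (x : X) (k : ℕ) :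
    omegaLimitSet f (f^[k] x) = omegaLimitSet f x := by
  ext y
  calc y ∈ omegaLimitSet f (f^[k] x)
      ↔ MapClusterPt y atTop ((fun n => f^[n] x) ∘ (· + k)) := by
        simp only [mem_omegaLimitSet_iff, comp_def, iterate_add_apply]
    _ ↔ y ∈ omegaLimitSet f x := by
        rw [mapClusterPt_comp, map_add_atTop_eq_nat, mem_omegaLimitSet_iff]

theorem omegaLimitSet_iterate_subset (f : X → X) (x : X) {M : ℕ} (hM : 0 < M) (c : ℕ) :
    omegaLimitSet f^[M] (f^[c] x) ⊆ omegaLimitSet f x := by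
  intro y hy
  rw [← omegaLimitSet_iterate_apply f x c, mem_omegaLimitSet_iff]
  rw [mem_omegaLimitSet_iff] at hy
  refine .of_comp (tendsto_id.const_mul_atTop' hM) ?_
  simpa only [comp_def, id_eq, iterate_mul] using hy

theorem exists_mem_omegaLimitSet_iterate {y : X} (hy : y ∈ omegaLimitSet f x) {M : ℕ}
    (hM : 0 < M) : ∃ d < M, y ∈ omegaLimitSet f^[M] (f^[d] x) := by
  rw [mem_omegaLimitSet_iff, mapClusterPt_iff_ultrafilter] at hy
  obtain ⟨𝒰, h𝒰, hlim⟩ := hy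
  obtain ⟨d, hd, hmod⟩ : ∃ d ∈ Iio M, ∀ᶠ n in (𝒰 : Filter ℕ), n % M = d :=
    (Ultrafilter.eventually_exists_mem_iff (finite_Iio M)).1
      (.of_forall fun n => ⟨n % M, Nat.mod_lt n hM, rfl⟩)
  refine ⟨d, hd, mem_omegaLimitSet_iff.2 (.of_comp
    ((Nat.tendsto_div_const_atTop hM.ne').mono_left h𝒰) (Tendsto.mapClusterPt ?_))⟩
  refine hlim.congr' (hmod.mono fun n hn => ?_)
  rw [comp_apply, ← iterate_mul, ← iterate_add_apply, ← hn, Nat.div_add_mod]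

theorem omegaLimitSet_subset_image [CompactSpace X] [T2Space Y] {g : Y → Y} {h : X → Y}
    (hh : Continuous h) (hfg : Semiconj h f g) :
    omegaLimitSet g (h x) ⊆ h '' omegaLimitSet f x := by
  intro y hy
  rw [mem_omegaLimitSet_iff, mapClusterPt_iff_ultrafilter] at hy
  obtain ⟨𝒰, h𝒰, hlim⟩ := hy
  obtain ⟨z, -, hz⟩ := isCompact_univ.ultrafilter_le_nhds (𝒰.map fun n => f^[n] x) (by simp)
  refine ⟨z, mem_omegaLimitSet_iff.2 (mapClusterPt_iff_ultrafilter.2 ⟨𝒰, h𝒰, hz⟩), ?_⟩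
  refine tendsto_nhds_unique ?_ hlim
  simpa only [comp_def, (hfg.iterate_right _).eq] using
    (hh.tendsto z).comp (Tendsto.mono_left hz le_rfl)

theorem infinite_omegaLimitSet_iterate [CompactSpace X] [T2Space X] (hf : Continuous f)
    (h : (omegaLimitSet f x).Infinite) {M : ℕ} (hM : 0 < M) (c : ℕ) :
    (omegaLimitSet f^[M] (f^[c] x)).Infinite := by
  obtain ⟨d, hd⟩ : ∃ d, (omegaLimitSet f^[M] (f^[d] x)).Infinite := by
    by_contra! hfin
    refine h (((finite_Iio M).biUnion fun d _ => hfin d).subset fun y hy => ?_)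
    obtain ⟨d, hd, hyd⟩ := exists_mem_omegaLimitSet_iterate hy hM
    exact mem_biUnion hd hyd
  have hcd : f^[M * c + d - c] (f^[c] x) = (f^[M])^[c] (f^[d] x) := by
    rw [← iterate_mul, ← iterate_add_apply, ← iterate_add_apply,
      Nat.sub_add_cancel ((Nat.le_mul_of_pos_left c hM).trans (Nat.le_add_right _ _))]
  rw [← omegaLimitSet_iterate_apply _ _ c, ← hcd] at hd
  exact (hd.mono (omegaLimitSet_subset_image (hf.iterate _)
    (Commute.iterate_iterate_self f _ M).semiconj)).of_image _

end OmegaLimitSet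

section PeriodicPoints

variable {X : Type*} {f : X → X}

theorem exists_forall_isPeriodicPt {P : Set X} (hP : P.Finite) (hPf : P ⊆ periodicPts f) :
    ∃ M > 0, ∀ z ∈ P, IsPeriodicPt f M z := by
  lift P to Finset X using hP
  exact ⟨∏ z ∈ P, minimalPeriod f z,
    Finset.prod_pos fun z hz => minimalPeriod_pos_of_mem_periodicPts (hPf hz),
    fun z hz => (isPeriodicPt_minimalPeriod f z).trans_dvd (Finset.dvd_prod_of_mem _ hz)⟩

theorem periodicPts_iterate_subset (f : X → X) {M : ℕ} (hM : 0 < M) :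
    periodicPts f^[M] ⊆ periodicPts f := by
  rintro z ⟨n, hn, hz⟩
  exact ⟨M * n, Nat.mul_pos hM hn, by rwa [IsPeriodicPt, iterate_mul]⟩

end PeriodicPoints

section FreeArc

/-- A parametrized arc whose interior separates the space: `coord` retracts the whole space onto
`[0, 1]` in such a way that the only points with coordinate in `(0, 1)` are those of the arc.
The parametrization is extended to all of `ℝ` to avoid subtypes; only `[0, 1]` matters. -/
structure FreeArc (X : Type*) [TopologicalSpace X] where
  path : ℝ → X
  coord : X → ℝ
  continuous_path : Continuous path
  continuous_coord : Continuous coord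
  coord_path : ∀ t ∈ Icc (0 : ℝ) 1, coord (path t) = t
  path_coord : ∀ y, coord y ∈ Ioo (0 : ℝ) 1 → path (coord y) = y

namespace FreeArc

variable {X : Type*} [TopologicalSpace X] (A : FreeArc X) {f : X → X} {x : X}
  {a b c d u w p q α β γ : ℝ}

/-- The same free arc traversed backwards; it reduces left-hand versions of lemmas to right-hand
ones. -/
def reflect : FreeArc X where
  path t := A.path (1 - t)
  coord y := 1 - A.coord y
  continuous_path := A.continuous_path.comp (by fun_prop)
  continuous_coord := continuous_const.sub A.continuous_coord
  coord_path t ht := by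
    rw [A.coord_path (1 - t) ⟨by linarith [ht.2], by linarith [ht.1]⟩, sub_sub_cancel]
  path_coord y hy := by
    rw [sub_sub_cancel, A.path_coord y ⟨by linarith [hy.2], by linarith [hy.1]⟩]

/-- The closed subarc between the parameters `a` and `b`. -/
def subarc (a b : ℝ) : Set X := A.path '' Icc a b

/-- The parameters of the interior points of the arc that lie in `ω_f(x)`. -/
def limitParams (f : X → X) (x : X) : Set ℝ := {τ ∈ Ioo 0 1 | A.path τ ∈ omegaLimitSet f x}

theorem isPreconnected_subarc (a b : ℝ) : IsPreconnected (A.subarc a b) :=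
  isPreconnected_Icc.image _ A.continuous_path.continuousOn

theorem isClosed_subarc [T2Space X] (a b : ℝ) : IsClosed (A.subarc a b) :=
  (isCompact_Icc.image A.continuous_path).isClosed

theorem injOn_path : InjOn A.path (Icc 0 1) := fun s hs t ht hst => by
  rw [← A.coord_path s hs, hst, A.coord_path t ht]

theorem disjoint_subarc (ha : 0 ≤ a) (hbc : b < c) (hd : d ≤ 1) :
    Disjoint (A.subarc a b) (A.subarc c d) := by
  refine disjoint_left.2 ?_
  rintro _ ⟨s, hs, rfl⟩ ⟨t, ht, hst⟩
  have := A.injOn_path ⟨by linarith [ht.1, hs.1, hs.2], ht.2.trans hd⟩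
    ⟨ha.trans hs.1, by linarith [hs.2, ht.1, ht.2]⟩ hst
  linarith [hs.2, ht.1]

theorem subarc_subset {C : Set X} (hC : IsPreconnected C) (ha : 0 < a) (hb : b < 1)
    (hCa : ∃ y ∈ C, A.coord y ≤ a) (hCb : ∃ y ∈ C, b ≤ A.coord y) : A.subarc a b ⊆ C := by
  obtain ⟨y, hy, hya⟩ := hCa
  obtain ⟨z, hz, hzb⟩ := hCb
  rintro _ ⟨s, hs, rfl⟩
  obtain ⟨v, hv, rfl⟩ := hC.intermediate_value hy hz A.continuous_coord.continuousOn
    ⟨hya.trans hs.1, hs.2.trans hzb⟩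
  rwa [A.path_coord v ⟨ha.trans_le hs.1, hs.2.trans_lt hb⟩]

theorem exists_isFixedPt {F : X → X} (hF : Continuous F) (hu : 0 < u) (huw : u < w) (hw : w < 1)
    (hFu : u < A.coord (F (A.path u))) (hFw : A.coord (F (A.path w)) < w) :
    ∃ z ∈ Ioo u w, IsFixedPt F (A.path z) := by
  have hc : Continuous fun t => t - A.coord (F (A.path t)) :=
    continuous_id.sub (A.continuous_coord.comp (hF.comp A.continuous_path))
  obtain ⟨z, hz, hz0⟩ := intermediate_value_Ioo huw.le hc.continuousOn
    (show (0 : ℝ) ∈ Ioo _ _ from ⟨sub_neg.2 hFu, sub_pos.2 hFw⟩)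
  refine ⟨z, hz, ?_⟩
  have hFz : A.coord (F (A.path z)) = z := (sub_eq_zero.1 hz0).symm
  have := A.path_coord (F (A.path z)) (by rw [hFz]; exact ⟨hu.trans hz.1, hz.2.trans hw⟩)
  rwa [hFz, eq_comm] at this

theorem coord_preimage_inter_omegaLimitSet_nonempty {S : Set ℝ}
    (h : (A.limitParams f x ∩ S).Nonempty) : (A.coord ⁻¹' S ∩ omegaLimitSet f x).Nonempty := by
  obtain ⟨τ, ⟨hτ01, hτ⟩, hτS⟩ := h
  exact ⟨_, by rwa [mem_preimage, A.coord_path τ (Ioo_subset_Icc_self hτ01)], hτ⟩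

theorem exists_orbit_param (h : (A.limitParams f x ∩ Ioo p q).Nonempty) (N : ℕ) :
    ∃ t ≥ N, ∃ s ∈ Ioo p q ∩ Ioo 0 1, A.path s = f^[t] x := by
  obtain ⟨t, ht, hs⟩ := exists_iterate_mem_of_inter_omegaLimitSet_nonempty
    ((isOpen_Ioo.inter isOpen_Ioo).preimage A.continuous_coord)
    (A.coord_preimage_inter_omegaLimitSet_nonempty
      (h.mono fun _ hτ => ⟨hτ.1, hτ.2, hτ.1.1⟩)) N
  exact ⟨t, ht, _, hs, A.path_coord _ hs.2⟩

/-! ### Periodic points between limit points -/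

theorem lt_coord_iterate_of_forall_notMem_periodicPts (hf : Continuous f) (hα : 0 ≤ α)
    (hβ : β ≤ 1) (hno : ∀ z ∈ Ioo α β, A.path z ∉ periodicPts f) (hu : α < u) (huw : u < w)
    (hw : w < β) {k : ℕ} (hk : 0 < k) (hfu : f^[k] (A.path u) = A.path w) {i : ℕ} (hi : 0 < i) :
    u < A.coord (f^[k * i] (A.path u)) := by
  induction i, hi using Nat.le_induction with
  | base => rwa [Nat.mul_one, hfu, A.coord_path w ⟨by linarith, by linarith⟩]
  | succ i hi ih =>
    rw [Nat.mul_succ, iterate_add_apply, hfu]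
    by_contra! hle
    obtain ⟨z, hz, hfz⟩ := A.exists_isFixedPt (hf.iterate (k * i)) (hα.trans_lt hu) huw
      (hw.trans_le hβ) ih (hle.trans_lt huw)
    exact hno z ⟨hu.trans hz.1, hz.2.trans hw⟩ ⟨_, Nat.mul_pos hk hi, hfz⟩

theorem coord_iterate_lt_of_forall_notMem_periodicPts (hf : Continuous f) (hα : 0 ≤ α)
    (hβ : β ≤ 1) (hno : ∀ z ∈ Ioo α β, A.path z ∉ periodicPts f) (hu : α < u) (huw : u < w)
    (hw : w < β) {k : ℕ} (hk : 0 < k) (hfw : f^[k] (A.path w) = A.path u) {i : ℕ} (hi : 0 < i) :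
    A.coord (f^[k * i] (A.path w)) < w := by
  have := A.reflect.lt_coord_iterate_of_forall_notMem_periodicPts hf (α := 1 - β) (β := 1 - α)
    (u := 1 - w) (w := 1 - u) (by linarith) (by linarith)
    (fun z hz => hno (1 - z) ⟨by linarith [hz.2], by linarith [hz.1]⟩) (by linarith)
    (by linarith) (by linarith) hk (by simpa only [reflect, sub_sub_cancel] using hfw) hi
  simp only [reflect, sub_sub_cancel] at this
  linarith

theorem exists_path_mem_periodicPts (hf : Continuous f) (hα : 0 ≤ α) (hβ : β ≤ 1)
    (hαγ : (A.limitParams f x ∩ Ioo α γ).Nonempty)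
    (hγβ : (A.limitParams f x ∩ Ioo γ β).Nonempty) : ∃ z ∈ Ioo α β, A.path z ∈ periodicPts f := by
  by_contra! hno
  obtain ⟨i, -, u, ⟨hu, -⟩, hui⟩ := A.exists_orbit_param hαγ 0
  obtain ⟨j, hij, w, ⟨hw, -⟩, hwj⟩ := A.exists_orbit_param hγβ (i + 1)
  obtain ⟨l, hjl, v, ⟨hv, -⟩, hvl⟩ := A.exists_orbit_param hαγ (j + 1)
  have huw : u < w := hu.2.trans hw.1
  have hfu : f^[j - i] (A.path u) = A.path w := by
    rw [hui, hwj, ← iterate_add_apply, Nat.sub_add_cancel (by lia)]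
  have hfw : f^[l - j] (A.path w) = A.path v := by
    rw [hwj, hvl, ← iterate_add_apply, Nat.sub_add_cancel (by lia)]
  have hup := A.lt_coord_iterate_of_forall_notMem_periodicPts hf hα hβ hno hu.1 huw hw.2
    (Nat.sub_pos_of_lt hij) hfu (Nat.sub_pos_of_lt hjl)
  have hdown := A.coord_iterate_lt_of_forall_notMem_periodicPts hf hα hβ hno hv.1
    (hv.2.trans hw.1) hw.2 (Nat.sub_pos_of_lt hjl) hfw (Nat.sub_pos_of_lt hij)
  rw [Nat.mul_comm] at hdown
  obtain ⟨z, hz, hfz⟩ := A.exists_isFixedPt (hf.iterate _) (hα.trans_lt hu.1) huw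
    (hw.2.trans_le hβ) hup hdown
  exact hno z ⟨hu.1.trans hz.1, hz.2.trans hw.2⟩
    ⟨_, Nat.mul_pos (Nat.sub_pos_of_lt hij) (Nat.sub_pos_of_lt hjl), hfz⟩

end FreeArc

end FreeArc

section ForwardOrbit

variable {X : Type*} {f : X → X} {V Q : Set X}

/-- The union of all forward images of `V`, including `V` itself. -/
def forwardOrbit (f : X → X) (V : Set X) : Set X := ⋃ n, f^[n] '' V

theorem subset_forwardOrbit (f : X → X) (V : Set X) : V ⊆ forwardOrbit f V := fun y hy =>
  mem_iUnion.2 ⟨0, y, hy, rfl⟩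

theorem mapsTo_forwardOrbit (f : X → X) (V : Set X) :
    MapsTo f (forwardOrbit f V) (forwardOrbit f V) := by
  intro y hy
  obtain ⟨n, v, hv, rfl⟩ := mem_iUnion.1 hy
  exact mem_iUnion.2 ⟨n + 1, v, hv, iterate_succ_apply' f n v⟩

theorem forwardOrbit_subset (hV : V ⊆ Q) (hQ : MapsTo f Q Q) : forwardOrbit f V ⊆ Q :=
  iUnion_subset fun n => ((hQ.iterate n).mono_left hV).image_subset

theorem isPreconnected_forwardOrbit [TopologicalSpace X] (hf : Continuous f)
    (hV : IsPreconnected V) {a : X} (ha : a ∈ V) (hfa : IsFixedPt f a) :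
    IsPreconnected (forwardOrbit f V) :=
  isPreconnected_iUnion ⟨a, mem_iInter.2 fun n => ⟨a, ha, hfa.iterate n⟩⟩ fun n =>
    hV.image _ (hf.iterate n).continuousOn

end ForwardOrbit

namespace FreeArc

variable {X : Type*} [TopologicalSpace X] (A : FreeArc X) {f F : X → X} {x y z : X}
  {a b c d l u v : ℝ}

/-! ### Horseshoes on a free arc -/

theorem exists_subarc_subset_iterate_image (hF : Continuous F) (hl : 0 < l) (hlu : l ≤ u)
    (hu : u < 1) (hab : A.subarc a b ⊆ F '' A.subarc a b)
    (h : A.subarc l u ⊆ forwardOrbit F (A.subarc a b)) :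
    ∃ n > 0, A.subarc l u ⊆ F^[n] '' A.subarc a b := by
  have hmono : Monotone fun n => F^[n] '' A.subarc a b := monotone_nat_of_le_succ fun n => by
    rw [iterate_succ, image_comp]
    exact image_mono hab
  obtain ⟨n, hn⟩ := mem_iUnion.1 (h ⟨l, left_mem_Icc.2 hlu, rfl⟩)
  obtain ⟨m, hm⟩ := mem_iUnion.1 (h ⟨u, right_mem_Icc.2 hlu, rfl⟩)
  refine ⟨n + m + 1, Nat.succ_pos _, A.subarc_subset
    ((A.isPreconnected_subarc a b).image _ (hF.iterate _).continuousOn) hl hu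
    ⟨_, hmono (by lia) hn, ?_⟩ ⟨_, hmono (by lia) hm, ?_⟩⟩
  · exact (A.coord_path l ⟨hl.le, by linarith⟩).le
  · exact (A.coord_path u ⟨by linarith, hu.le⟩).ge

/-- The forward orbit `W` of the subarc under `f^M` satisfies `W ⊆ f^k(W)`, because `f^k(W)` is
connected and reaches across `[l, u]`. Iterating this `M` times gives `f^k(W) ⊆ f^{kM}(W) ⊆ W`, so
`W` itself reaches across `[l, u]`. -/
theorem exists_subarc_subset_iterate_image_of_mem (hf : Continuous f) {M : ℕ} (hM : 0 < M)
    (hl : 0 < l) (hla : l ≤ a) (hab : a ≤ b) (hbu : b ≤ u) (hu : u < 1)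
    (ha : IsFixedPt f^[M] (A.path a)) (hb : IsFixedPt f^[M] (A.path b))
    (hy : y ∈ A.subarc a b) {k : ℕ}
    (hlt : (A.coord ⁻¹' Iio l ∩ omegaLimitSet f^[M] (f^[k] y)).Nonempty)
    (hgt : (A.coord ⁻¹' Ioi u ∩ omegaLimitSet f^[M] (f^[k] y)).Nonempty) :
    ∃ n > 0, A.subarc l u ⊆ (f^[M])^[n] '' A.subarc a b := by
  have haV : A.path a ∈ A.subarc a b := ⟨a, left_mem_Icc.2 hab, rfl⟩
  have hbV : A.path b ∈ A.subarc a b := ⟨b, right_mem_Icc.2 hab, rfl⟩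
  have hF : Continuous f^[M] := hf.iterate M
  have hV := A.isPreconnected_subarc a b
  set W := forwardOrbit f^[M] (A.subarc a b)
  have hFW : MapsTo f^[M] W W := mapsTo_forwardOrbit _ _
  have hVW : A.subarc a b ⊆ W := subset_forwardOrbit _ _
  have hcomm : Semiconj f^[k] f^[M] f^[M] := Commute.iterate_iterate_self f k M
  have hluk : A.subarc l u ⊆ f^[k] '' W := by
    have horbit (n : ℕ) : (f^[M])^[n] (f^[k] y) ∈ f^[k] '' W :=
      ⟨_, hFW.iterate n (hVW hy), (hcomm.iterate_right n).eq y⟩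
    obtain ⟨n, -, hn⟩ := exists_iterate_mem_of_inter_omegaLimitSet_nonempty
      (isOpen_Iio.preimage A.continuous_coord) hlt 0
    obtain ⟨m, -, hm⟩ := exists_iterate_mem_of_inter_omegaLimitSet_nonempty
      (isOpen_Ioi.preimage A.continuous_coord) hgt 0
    exact A.subarc_subset
      ((isPreconnected_forwardOrbit hF hV haV ha).image _ (hf.iterate k).continuousOn) hl hu
      ⟨_, horbit n, hn.le⟩ ⟨_, horbit m, hm.le⟩
  have hWk : W ⊆ f^[k] '' W :=
    forwardOrbit_subset ((image_mono (Icc_subset_Icc hla hbu)).trans hluk)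
      (hcomm.mapsTo_image hFW)
  have hkW : f^[k] '' W ⊆ W := by
    refine (subset_image_iterate_mul hWk Subset.rfl hM).trans ?_
    rw [Nat.mul_comm, iterate_mul]
    exact (hFW.iterate k).image_subset
  exact A.exists_subarc_subset_iterate_image hF hl (hla.trans (hab.trans hbu)) hu
    (A.subarc_subset (hV.image _ hF.continuousOn) (hl.trans_le hla) (hbu.trans_lt hu)
      ⟨_, ⟨_, haV, ha⟩, (A.coord_path a ⟨by linarith, by linarith⟩).le⟩
      ⟨_, ⟨_, hbV, hb⟩, (A.coord_path b ⟨by linarith, by linarith⟩).ge⟩) (hluk.trans hkW)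

theorem exists_subarc_subset_iterate_image_of_limitParams (hf : Continuous f) {M : ℕ}
    (hM : 0 < M) (hl : 0 < l) (hla : l ≤ a) (hbu : b ≤ u) (hu : u < 1)
    (ha : IsFixedPt f^[M] (A.path a)) (hb : IsFixedPt f^[M] (A.path b))
    (hab : (A.limitParams f x ∩ Ioo a b).Nonempty) {k : ℕ}
    (hlt : (A.coord ⁻¹' Iio l ∩ omegaLimitSet f^[M] (f^[k] x)).Nonempty)
    (hgt : (A.coord ⁻¹' Ioi u ∩ omegaLimitSet f^[M] (f^[k] x)).Nonempty) :
    ∃ n > 0, A.subarc l u ⊆ (f^[M])^[n] '' A.subarc a b := by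
  obtain ⟨t, -, s, ⟨hs, -⟩, hst⟩ := A.exists_orbit_param hab 0
  have hclass : omegaLimitSet f^[M] (f^[k + M * t - t] (A.path s)) =
      omegaLimitSet f^[M] (f^[k] x) := by
    have hle : t ≤ k + M * t := (Nat.le_mul_of_pos_left t hM).trans (Nat.le_add_left _ _)
    rw [hst, ← iterate_add_apply, Nat.sub_add_cancel hle, Nat.add_comm, iterate_add_apply,
      iterate_mul, omegaLimitSet_iterate_apply]
  exact A.exists_subarc_subset_iterate_image_of_mem hf hM hl hla (hs.1.trans hs.2).le hbu hu ha hb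
    ⟨s, Ioo_subset_Icc_self hs, rfl⟩ (hclass ▸ hlt) (hclass ▸ hgt)

theorem hasHorseshoe_of_subarc_subset [T2Space X] {n m : ℕ} (hn : 0 < n) (hm : 0 < m)
    (ha : 0 ≤ a) (hab : a ≤ b) (hbc : b < c) (hcd : c ≤ d) (hd : d ≤ 1)
    (hFab : A.subarc a d ⊆ F^[n] '' A.subarc a b) (hFcd : A.subarc a d ⊆ F^[m] '' A.subarc c d) :
    HasHorseshoe F := by
  have hsub : A.subarc a b ∪ A.subarc c d ⊆ A.subarc a d :=
    union_subset (image_mono (Icc_subset_Icc_right (by linarith)))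
      (image_mono (Icc_subset_Icc_left (by linarith)))
  exact .of_subset_image (A.isClosed_subarc a b) (A.isClosed_subarc c d)
    (A.disjoint_subarc ha hbc hd) ⟨_, a, left_mem_Icc.2 hab, rfl⟩ hn hm (hsub.trans hFab)
    (hsub.trans hFcd)

theorem hasHorseshoe_of_crossing [T2Space X] (hf : Continuous f) {M : ℕ} (hM : 0 < M)
    (ha : 0 < a) (hbc : b < c) (hd : d < 1)
    (hfa : IsFixedPt f^[M] (A.path a)) (hfb : IsFixedPt f^[M] (A.path b))
    (hfc : IsFixedPt f^[M] (A.path c)) (hfd : IsFixedPt f^[M] (A.path d))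
    (hab : (A.limitParams f x ∩ Ioo a b).Nonempty) (hcd : (A.limitParams f x ∩ Ioo c d).Nonempty)
    {k : ℕ} (hlt : (A.coord ⁻¹' Iio a ∩ omegaLimitSet f^[M] (f^[k] x)).Nonempty)
    (hgt : (A.coord ⁻¹' Ioi d ∩ omegaLimitSet f^[M] (f^[k] x)).Nonempty) : HasHorseshoe f := by
  have hab' : a < b := nonempty_Ioo.1 (hab.mono inter_subset_right)
  have hcd' : c < d := nonempty_Ioo.1 (hcd.mono inter_subset_right)
  obtain ⟨n, hn, hFab⟩ := A.exists_subarc_subset_iterate_image_of_limitParams hf hM ha le_rfl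
    (hbc.trans hcd').le hd hfa hfb hab hlt hgt
  obtain ⟨m, hm, hFcd⟩ := A.exists_subarc_subset_iterate_image_of_limitParams hf hM ha
    (hab'.trans hbc).le le_rfl hd hfc hfd hcd hlt hgt
  exact (A.hasHorseshoe_of_subarc_subset hn hm ha.le hab'.le hbc hcd'.le hd.le hFab hFcd).of_iterate
    hM

theorem hasHorseshoe_of_iterate_eq_right [T2Space X] (hF : Continuous F) (hz : IsFixedPt F z)
    (ha : 0 < a) (hav : a < v) (hvb : v ≤ b) (hb : b < 1) {k : ℕ} (hv : F^[k] (A.path v) = z)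
    (hbz : b < A.coord z) (hωa : (A.coord ⁻¹' Iio a ∩ omegaLimitSet F (A.path a)).Nonempty)
    (hωb : (A.coord ⁻¹' Iio a ∩ omegaLimitSet F (A.path b)).Nonempty) : HasHorseshoe F := by
  have hvz (n : ℕ) (hn : k ≤ n) : F^[n] (A.path v) = z := by
    rw [← Nat.sub_add_cancel hn, iterate_add_apply, hv, hz.iterate (n - k)]
  have hopen : IsOpen (A.coord ⁻¹' Iio a) := isOpen_Iio.preimage A.continuous_coord
  obtain ⟨n, hkn, hna⟩ := exists_iterate_mem_of_inter_omegaLimitSet_nonempty hopen hωa (k + 1)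
  obtain ⟨m, hkm, hmb⟩ := exists_iterate_mem_of_inter_omegaLimitSet_nonempty hopen hωb (k + 1)
  obtain ⟨w, hbw, haw, hwv⟩ : ∃ w, b < A.coord (F^[n] (A.path w)) ∧ w ∈ Ioo a v := by
    have hcont : Continuous fun t => A.coord (F^[n] (A.path t)) :=
      A.continuous_coord.comp ((hF.iterate n).comp A.continuous_path)
    have hnear : ∀ᶠ t in 𝓝 v, b < A.coord (F^[n] (A.path t)) :=
      hcont.continuousAt.eventually_const_lt (by simpa only [hvz n (by lia)] using hbz)
    exact ((hnear.filter_mono nhdsWithin_le_nhds).and (Ioo_mem_nhdsLT hav)).exists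
  have hFaw : A.subarc a b ⊆ F^[n] '' A.subarc a w :=
    A.subarc_subset ((A.isPreconnected_subarc a w).image _ (hF.iterate n).continuousOn) ha hb
      ⟨_, ⟨_, ⟨a, left_mem_Icc.2 haw.le, rfl⟩, rfl⟩, hna.le⟩
      ⟨_, ⟨_, ⟨w, right_mem_Icc.2 haw.le, rfl⟩, rfl⟩, hbw.le⟩
  have hFvb : A.subarc a b ⊆ F^[m] '' A.subarc v b :=
    A.subarc_subset ((A.isPreconnected_subarc v b).image _ (hF.iterate m).continuousOn) ha hb
      ⟨_, ⟨_, ⟨b, right_mem_Icc.2 hvb, rfl⟩, rfl⟩, hmb.le⟩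
      ⟨_, ⟨_, ⟨v, left_mem_Icc.2 hvb, rfl⟩, rfl⟩, by rw [hvz m (by lia)]; exact hbz.le⟩
  exact A.hasHorseshoe_of_subarc_subset (by lia) (by lia) ha.le haw.le hwv hvb hb.le hFaw hFvb

theorem hasHorseshoe_of_iterate_eq_left [T2Space X] (hF : Continuous F) (hz : IsFixedPt F z)
    (ha : 0 < a) (hav : a ≤ v) (hvb : v < b) (hb : b < 1) {k : ℕ} (hv : F^[k] (A.path v) = z)
    (hza : A.coord z < a) (hωa : (A.coord ⁻¹' Ioi b ∩ omegaLimitSet F (A.path a)).Nonempty)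
    (hωb : (A.coord ⁻¹' Ioi b ∩ omegaLimitSet F (A.path b)).Nonempty) : HasHorseshoe F := by
  have hpre : A.reflect.coord ⁻¹' Iio (1 - b) = A.coord ⁻¹' Ioi b := by
    ext y
    simp [reflect]
  refine A.reflect.hasHorseshoe_of_iterate_eq_right hF hz (a := 1 - b) (v := 1 - v) (b := 1 - a)
    (k := k) (by linarith) (by linarith) (by linarith) (by linarith) ?_ ?_ ?_ ?_
  · simpa only [reflect, sub_sub_cancel] using hv
  · simpa only [reflect, sub_lt_sub_iff_left] using hza
  · rw [hpre]
    simpa only [reflect, sub_sub_cancel] using hωb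
  · rw [hpre]
    simpa only [reflect, sub_sub_cancel] using hωa

end FreeArc

section InfiniteSets

variable {ι : Type*} [LinearOrder ι] {S P : Set ι} {α β : ι}

theorem exists_strictMonoOn_mapsTo_of_infinite (hS : S.Infinite) (N : ℕ) :
    ∃ τ : ℕ → ι, StrictMonoOn τ (Iio N) ∧ MapsTo τ (Iio N) S := by
  obtain ⟨t, htS, ht⟩ := hS.exists_subset_card_eq N
  obtain ⟨r, -⟩ := hS.nonempty
  refine ⟨fun i => if h : i < N then t.orderEmbOfFin ht ⟨i, h⟩ else r, ?_, ?_⟩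
  · intro i hi j hj hij
    simpa only [dif_pos (mem_Iio.1 hi), dif_pos (mem_Iio.1 hj), OrderEmbedding.lt_iff_lt,
      Fin.mk_lt_mk] using hij
  · intro i hi
    simpa only [dif_pos (mem_Iio.1 hi)] using htS (t.orderEmbOfFin_mem ht _)

theorem exists_Ioo_disjoint_of_infinite (hS : (S ∩ Ioo α β).Infinite) (hP : P.Finite) :
    ∃ α' β', α ≤ α' ∧ β' ≤ β ∧ (S ∩ Ioo α' β').Infinite ∧ Disjoint (Ioo α' β') P := by
  induction P, hP using Set.Finite.induction_on with
  | empty => exact ⟨α, β, le_rfl, le_rfl, hS, disjoint_empty _⟩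
  | @insert r P _ _ ih =>
    obtain ⟨α', β', hα, hβ, hinf, hd⟩ := ih
    simp only [disjoint_insert_right]
    by_cases hr : r ∈ Ioo α' β'
    · have hcover : S ∩ Ioo α' β' ⊆ S ∩ Ioo α' r ∪ S ∩ Ioo r β' ∪ {r} := by
        rintro s ⟨hs, hs'⟩
        rcases lt_trichotomy s r with h | h | h
        · exact .inl (.inl ⟨hs, hs'.1, h⟩)
        · exact .inr h
        · exact .inl (.inr ⟨hs, h, hs'.2⟩)
      have hinf' := (infinite_union.1 (hinf.mono hcover)).resolve_right
        (finite_singleton r).not_infinite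
      rcases infinite_union.1 hinf' with h | h
      · exact ⟨α', r, hα, hr.2.le.trans hβ, h, fun h => h.2.false,
          hd.mono_left (Ioo_subset_Ioo_right hr.2.le)⟩
      · exact ⟨r, β', hα.trans hr.1.le, hβ, h, fun h => h.1.false,
          hd.mono_left (Ioo_subset_Ioo_left hr.1.le)⟩
    · exact ⟨α', β', hα, hβ, hinf, hr, hd⟩

end InfiniteSets

namespace FreeArc

variable {X : Type*} [TopologicalSpace X] (A : FreeArc X) {f : X → X} {x z z₁ z₂ : X}
  {p q α β : ℝ}

/-! ### Periodic points around infinitely many limit points -/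

theorem infinite_limitParams_inter_Ioo {S : Set X} (hS : S.Infinite) (hSω : S ⊆ omegaLimitSet f x)
    (hp : 0 < p) (hq : q < 1) (hSpq : MapsTo A.coord S (Icc p q)) :
    (A.limitParams f x ∩ Ioo p q).Infinite := by
  have hpath : ∀ y ∈ S, A.path (A.coord y) = y := fun y hy =>
    A.path_coord y (Icc_subset_Ioo hp hq (hSpq hy))
  have hinf : (A.coord '' S \ {p, q}).Infinite :=
    (hS.image fun y hy y' hy' h => by rw [← hpath y hy, h, hpath y' hy']).sdiff (toFinite _)
  refine hinf.mono ?_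
  rintro _ ⟨⟨y, hy, rfl⟩, hne⟩
  have hmem := hSpq hy
  simp only [mem_insert_iff, mem_singleton_iff, not_or] at hne
  exact ⟨⟨Icc_subset_Ioo hp hq hmem, (hpath y hy).symm ▸ hSω hy⟩,
    lt_of_le_of_ne hmem.1 (Ne.symm hne.1), lt_of_le_of_ne hmem.2 hne.2⟩

theorem infinite_omegaLimitSet_of_limitParams (h : (A.limitParams f x).Infinite) :
    (omegaLimitSet f x).Infinite :=
  (h.image (A.injOn_path.mono fun _ hτ => Ioo_subset_Icc_self hτ.1)).mono
    (image_subset_iff.2 fun _ hτ => hτ.2)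

theorem limitParams_iterate_subset {M : ℕ} (hM : 0 < M) (c : ℕ) :
    A.limitParams f^[M] (f^[c] x) ⊆ A.limitParams f x := fun _ hτ =>
  ⟨hτ.1, omegaLimitSet_iterate_subset f x hM c hτ.2⟩

theorem exists_infinite_limitParams_iterate (h : (A.limitParams f x ∩ Ioo α β).Infinite) {M : ℕ}
    (hM : 0 < M) : ∃ c, (A.limitParams f^[M] (f^[c] x) ∩ Ioo α β).Infinite := by
  by_contra! hfin
  refine h (((finite_Iio M).biUnion fun d _ => hfin d).subset fun τ hτ => ?_)
  obtain ⟨d, hd, hτd⟩ := exists_mem_omegaLimitSet_iterate hτ.1.2 hM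
  exact mem_biUnion hd ⟨⟨hτ.1.1, hτd⟩, hτ.2⟩

theorem exists_interlaced_periodicPts (hf : Continuous f) (hα : 0 ≤ α) (hβ : β ≤ 1)
    (h : (A.limitParams f x ∩ Ioo α β).Infinite) (n : ℕ) :
    ∃ p : ℕ → ℝ, (∀ i < n, p i ∈ Ioo α β ∧ A.path (p i) ∈ periodicPts f) ∧
      ∀ i, i + 1 < n → (A.limitParams f x ∩ Ioo (p i) (p (i + 1))).Nonempty := by
  obtain ⟨τ, hmono, hτ⟩ := exists_strictMonoOn_mapsTo_of_infinite h (4 * n)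
  have hlt {i j : ℕ} (hij : i < j) (hj : j < 4 * n) : τ i < τ j :=
    hmono (hij.trans hj) hj hij
  have hper (i : ℕ) (hi : i < n) :
      ∃ z ∈ Ioo (τ (4 * i)) (τ (4 * i + 3)), A.path z ∈ periodicPts f := by
    have h1 := hτ (show 4 * i + 1 < 4 * n by lia)
    have h2 := hτ (show 4 * i + 2 < 4 * n by lia)
    obtain ⟨γ, hγ⟩ := exists_between (hlt (show 4 * i + 1 < 4 * i + 2 by lia) (by lia))
    exact A.exists_path_mem_periodicPts hf
      (hα.trans (hτ (show 4 * i < 4 * n by lia)).2.1.le)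
      ((hτ (show 4 * i + 3 < 4 * n by lia)).2.2.le.trans hβ)
      ⟨_, h1.1, hlt (by lia) (by lia), hγ.1⟩ ⟨_, h2.1, hγ.2, hlt (by lia) (by lia)⟩
  choose! p hp hpf using hper
  refine ⟨p, fun i hi => ⟨⟨?_, ?_⟩, hpf i hi⟩, fun i hi => ⟨τ (4 * i + 3), ?_, ?_, ?_⟩⟩
  · exact (hτ (show 4 * i < 4 * n by lia)).2.1.trans (hp i hi).1
  · exact (hp i hi).2.trans (hτ (show 4 * i + 3 < 4 * n by lia)).2.2
  · exact (hτ (show 4 * i + 3 < 4 * n by lia)).1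
  · exact (hp i (by lia)).2
  · exact (hlt (show 4 * i + 3 < 4 * (i + 1) by lia) (by lia)).trans (hp (i + 1) hi).1

variable [T2Space X]

theorem notMem_forwardOrbit_of_isPeriodicPt (hf : Continuous f) (hno : ¬HasHorseshoe f)
    {M : ℕ} (hM : 0 < M) (hz : IsPeriodicPt f M z) {p₁ p₂ q₁ q₂ : ℝ}
    (hgap : ∀ n, A.coord (f^[n] z) ∉ Ioo α β)
    (hαp : (A.limitParams f^[M] x ∩ Ioo α p₁).Nonempty)
    (hp : (A.limitParams f^[M] x ∩ Ioo p₁ p₂).Nonempty)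
    (hq : (A.limitParams f^[M] x ∩ Ioo q₂ q₁).Nonempty)
    (hqβ : (A.limitParams f^[M] x ∩ Ioo q₁ β).Nonempty) :
    z ∉ forwardOrbit f (A.subarc p₂ q₂) := by
  intro hmem
  obtain ⟨n, _, ⟨v, hv, rfl⟩, hvz⟩ := mem_iUnion.1 hmem
  obtain ⟨t, -, a, ⟨ha, ha01⟩, hat⟩ := A.exists_orbit_param hp 0
  obtain ⟨s, -, b, ⟨hb, hb01⟩, hbs⟩ := A.exists_orbit_param hq 0
  have hF : Continuous f^[M] := hf.iterate M
  have hFz : IsFixedPt f^[M] (f^[M * n - n] z) := hz.apply_iterate _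
  have hFv : (f^[M])^[n] (A.path v) = f^[M * n - n] z := by
    rw [← hvz, ← iterate_add_apply, Nat.sub_add_cancel (Nat.le_mul_of_pos_left n hM), iterate_mul]
  have hωa : omegaLimitSet f^[M] (A.path a) = omegaLimitSet f^[M] x := by
    rw [hat, omegaLimitSet_iterate_apply]
  have hωb : omegaLimitSet f^[M] (A.path b) = omegaLimitSet f^[M] x := by
    rw [hbs, omegaLimitSet_iterate_apply]
  have hout := hgap (M * n - n)
  rw [mem_Ioo, not_and_or, not_lt, not_lt] at hout
  refine hno (HasHorseshoe.of_iterate hM ?_)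
  rcases hout with hzα | hzβ
  · have hbeyond : (A.coord ⁻¹' Ioi b ∩ omegaLimitSet f^[M] x).Nonempty :=
      A.coord_preimage_inter_omegaLimitSet_nonempty
        (hqβ.mono (inter_subset_inter_right _ fun τ hτ => hb.2.trans hτ.1))
    obtain ⟨_, -, hαp₁⟩ := hαp
    exact A.hasHorseshoe_of_iterate_eq_left hF hFz ha01.1 (ha.2.le.trans hv.1)
      (hv.2.trans_lt hb.1) hb01.2 hFv
      (hzα.trans_lt (hαp₁.1.trans (hαp₁.2.trans ha.1))) (hωa ▸ hbeyond) (hωb ▸ hbeyond)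
  · have hbeyond : (A.coord ⁻¹' Iio a ∩ omegaLimitSet f^[M] x).Nonempty :=
      A.coord_preimage_inter_omegaLimitSet_nonempty
        (hαp.mono (inter_subset_inter_right _ fun τ hτ => hτ.2.trans ha.1))
    obtain ⟨_, -, hq₁β⟩ := hqβ
    exact A.hasHorseshoe_of_iterate_eq_right hF hFz ha01.1 (ha.2.trans_le hv.1)
      (hv.2.trans hb.1.le) hb01.2 hFv
      ((hb.2.trans (hq₁β.1.trans hq₁β.2)).trans_le hzβ) (hωa ▸ hbeyond) (hωb ▸ hbeyond)

variable [CompactSpace X]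

/-- Among ten interlaced periodic points, the `f^M`-limit set of a point that lands between the
fourth and the fifth is confined between the first and the eighth, for otherwise it would cross
two adjacent gaps. -/
theorem exists_periodicPts_infinite_limitParams (hf : Continuous f) (hno : ¬HasHorseshoe f)
    (hα : 0 ≤ α) (hβ : β ≤ 1) (h : (A.limitParams f x ∩ Ioo α β).Infinite) :
    ∃ p q, A.path p ∈ periodicPts f ∧ A.path q ∈ periodicPts f ∧
      (A.limitParams f x ∩ Ioo α p).Nonempty ∧ (A.limitParams f x ∩ Ioo p q).Infinite ∧
      (A.limitParams f x ∩ Ioo q β).Nonempty := by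
  obtain ⟨p, hp, hgap⟩ := A.exists_interlaced_periodicPts hf hα hβ h 10
  obtain ⟨M, hM, hfix⟩ := exists_forall_isPeriodicPt (f := f)
    (P := (fun i => A.path (p i)) '' Iio 10) ((finite_Iio 10).image _)
    (image_subset_iff.2 fun i hi => (hp i hi).2)
  replace hfix (i : ℕ) (hi : i < 10) : IsFixedPt f^[M] (A.path (p i)) := hfix _ ⟨i, hi, rfl⟩
  have hlt (i : ℕ) (hi : i + 1 < 10) : p i < p (i + 1) :=
    nonempty_Ioo.1 ((hgap i hi).mono inter_subset_right)
  have hpos (i : ℕ) (hi : i < 10) : 0 < p i := hα.trans_lt (hp i hi).1.1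
  have hlt1 (i : ℕ) (hi : i < 10) : p i < 1 := (hp i hi).1.2.trans_le hβ
  obtain ⟨τ, hτ, hτ45⟩ := hgap 4 (by lia)
  obtain ⟨k, -, hk⟩ := exists_mem_omegaLimitSet_iterate hτ.2 hM
  have hτω {S : Set ℝ} (hS : τ ∈ S) : (A.coord ⁻¹' S ∩ omegaLimitSet f^[M] (f^[k] x)).Nonempty :=
    A.coord_preimage_inter_omegaLimitSet_nonempty ⟨τ, ⟨hτ.1, hk⟩, hS⟩
  have hconf : MapsTo A.coord (omegaLimitSet f^[M] (f^[k] x)) (Icc (p 1) (p 8)) := by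
    intro y hy
    by_contra hmem
    rw [mem_Icc, not_and_or, not_le, not_le] at hmem
    rcases hmem with hy1 | hy8
    · exact hno (A.hasHorseshoe_of_crossing hf hM (hpos 1 (by lia)) (hlt 2 (by lia))
        (hlt1 4 (by lia)) (hfix 1 (by lia)) (hfix 2 (by lia)) (hfix 3 (by lia)) (hfix 4 (by lia))
        (hgap 1 (by lia)) (hgap 3 (by lia)) ⟨y, hy1, hy⟩ (hτω hτ45.1))
    · exact hno (A.hasHorseshoe_of_crossing hf hM (hpos 5 (by lia)) (hlt 6 (by lia))
        (hlt1 8 (by lia)) (hfix 5 (by lia)) (hfix 6 (by lia)) (hfix 7 (by lia)) (hfix 8 (by lia))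
        (hgap 5 (by lia)) (hgap 7 (by lia)) (hτω hτ45.2) ⟨y, hy8, hy⟩)
  have hinf := infinite_omegaLimitSet_iterate hf
    (A.infinite_omegaLimitSet_of_limitParams (h.mono inter_subset_left)) hM k
  refine ⟨p 1, p 8, (hp 1 (by lia)).2, (hp 8 (by lia)).2, (hgap 0 (by lia)).mono ?_,
    A.infinite_limitParams_inter_Ioo hinf (omegaLimitSet_iterate_subset f x hM k) (hpos 1 (by lia))
      (hlt1 8 (by lia)) hconf, (hgap 8 (by lia)).mono ?_⟩
  · exact inter_subset_inter_right _ (Ioo_subset_Ioo_left (hp 0 (by lia)).1.1.le)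
  · exact inter_subset_inter_right _ (Ioo_subset_Ioo_right (hp 9 (by lia)).1.2.le)

theorem exists_infinite_limitParams_notMem_forwardOrbit (hf : Continuous f)
    (hno : ¬HasHorseshoe f) (hz : z ∈ periodicPts f) (hα : 0 ≤ α) (hβ : β ≤ 1)
    (h : (A.limitParams f x ∩ Ioo α β).Infinite) :
    ∃ a b, A.path a ∈ periodicPts f ∧ A.path b ∈ periodicPts f ∧ α < a ∧ b < β ∧
      (A.limitParams f x ∩ Ioo a b).Infinite ∧ z ∉ forwardOrbit f (A.subarc a b) := by
  obtain ⟨M, hM, hzM⟩ := hz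
  have hF : Continuous f^[M] := hf.iterate M
  have hnoF : ¬HasHorseshoe f^[M] := mt (HasHorseshoe.of_iterate hM) hno
  obtain ⟨c, hc⟩ := A.exists_infinite_limitParams_iterate h hM
  obtain ⟨α', β', hαα', hβ'β, hinf, hd⟩ := exists_Ioo_disjoint_of_infinite hc
    (P := (fun n => A.coord (f^[n] z)) '' Iio M) ((finite_Iio M).image _)
  obtain ⟨p₁, q₁, -, -, hαp, hpq₁, hqβ⟩ :=
    A.exists_periodicPts_infinite_limitParams hF hnoF (hα.trans hαα') (hβ'β.trans hβ) hinf
  have hαp₁ : α' < p₁ := nonempty_Ioo.1 (hαp.mono inter_subset_right)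
  have hq₁β : q₁ < β' := nonempty_Ioo.1 (hqβ.mono inter_subset_right)
  obtain ⟨p₂, q₂, hp₂, hq₂, hp, hpq₂, hq⟩ :=
    A.exists_periodicPts_infinite_limitParams hF hnoF ((hα.trans hαα').trans hαp₁.le)
      (hq₁β.le.trans (hβ'β.trans hβ)) hpq₁
  have hp₁p₂ : p₁ < p₂ := nonempty_Ioo.1 (hp.mono inter_subset_right)
  have hq₂q₁ : q₂ < q₁ := nonempty_Ioo.1 (hq.mono inter_subset_right)
  have hgap (n : ℕ) : A.coord (f^[n] z) ∉ Ioo α' β' := fun hn =>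
    disjoint_left.1 hd hn ⟨n % M, Nat.mod_lt n hM, by simp only [hzM.iterate_mod_apply]⟩
  exact ⟨p₂, q₂, periodicPts_iterate_subset f hM hp₂, periodicPts_iterate_subset f hM hq₂,
    hαα'.trans_lt (hαp₁.trans hp₁p₂), (hq₂q₁.trans hq₁β).trans_le hβ'β,
    hpq₂.mono (inter_subset_inter_left _ (A.limitParams_iterate_subset hM c)),
    A.notMem_forwardOrbit_of_isPeriodicPt hf hno hM hzM hgap hαp hp hq hqβ⟩

theorem exists_infinite_limitParams_notMem_forwardOrbit₂ (hf : Continuous f)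
    (hno : ¬HasHorseshoe f) (hz₁ : z₁ ∈ periodicPts f) (hz₂ : z₂ ∈ periodicPts f) (hα : 0 ≤ α)
    (hβ : β ≤ 1) (h : (A.limitParams f x ∩ Ioo α β).Infinite) :
    ∃ a b, A.path a ∈ periodicPts f ∧ A.path b ∈ periodicPts f ∧ α < a ∧ b < β ∧
      (A.limitParams f x ∩ Ioo a b).Infinite ∧ z₁ ∉ forwardOrbit f (A.subarc a b) ∧
      z₂ ∉ forwardOrbit f (A.subarc a b) := by
  obtain ⟨a, b, -, -, hαa, hbβ, hab, hz₁ab⟩ :=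
    A.exists_infinite_limitParams_notMem_forwardOrbit hf hno hz₁ hα hβ h
  obtain ⟨c, d, hc, hd, hac, hdb, hcd, hz₂cd⟩ :=
    A.exists_infinite_limitParams_notMem_forwardOrbit hf hno hz₂ (hα.trans hαa.le)
      (hbβ.le.trans hβ) hab
  have hsub : forwardOrbit f (A.subarc c d) ⊆ forwardOrbit f (A.subarc a b) :=
    forwardOrbit_subset ((image_mono (Icc_subset_Icc hac.le hdb.le)).trans
      (subset_forwardOrbit _ _)) (mapsTo_forwardOrbit _ _)
  exact ⟨c, d, hc, hd, hαa.trans hac, hdb.trans hbβ, hcd, fun h => hz₁ab (hsub h), hz₂cd⟩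

end FreeArc

section PeriodicComponent

variable {X : Type*} {f g : X → X} {D G I K : Set X} {u y : X} {s : ℕ}

theorem subset_arcOrbit (hs : 1 ≤ s) : I ⊆ arcOrbit f I s := fun y hy =>
  mem_biUnion (Finset.mem_coe.2 (Finset.mem_range.2 hs)) ⟨y, hy, rfl⟩

theorem arcOrbit_subset (hI : I ⊆ G) (hG : MapsTo f G G) : arcOrbit f I s ⊆ G :=
  iUnion₂_subset fun i _ => ((hG.iterate i).mono_left hI).image_subset

theorem mapsTo_arcOrbit (hs : 1 ≤ s) (h : MapsTo f^[s] I I) :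
    MapsTo f (arcOrbit f I s) (arcOrbit f I s) := by
  intro y hy
  obtain ⟨i, hi, z, hz, rfl⟩ := mem_iUnion₂.1 hy
  rcases eq_or_lt_of_le (Nat.succ_le_of_lt (Finset.mem_range.1 hi)) with rfl | hlt
  · exact subset_arcOrbit hs (iterate_succ_apply' f i z ▸ h hz)
  · exact mem_biUnion (Finset.mem_coe.2 (Finset.mem_range.2 hlt))
      ⟨z, hz, iterate_succ_apply' f i z⟩

variable [TopologicalSpace X]

theorem isClosed_arcOrbit [T2Space X] (hf : Continuous f) (hI : IsCompact I) (s : ℕ) :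
    IsClosed (arcOrbit f I s) :=
  ((Finset.range s).isCompact_biUnion fun i _ => hI.image (hf.iterate i)).isClosed

theorem isClosed_connectedComponentIn (hD : IsClosed D) (y : X) :
    IsClosed (connectedComponentIn D y) := by
  refine isClosed_of_closure_subset fun z hz => ?_
  have hne : (connectedComponentIn D y).Nonempty := closure_nonempty_iff.1 ⟨z, hz⟩
  exact isPreconnected_connectedComponentIn.closure.subset_connectedComponentIn
    (subset_closure (mem_connectedComponentIn (connectedComponentIn_nonempty_iff.1 hne)))
    (closure_minimal (connectedComponentIn_subset D y) hD) hz

theorem mapsTo_connectedComponentIn (hg : Continuous g) (hG : MapsTo g G G)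
    (hu : u ∈ connectedComponentIn G y) (hgu : g u ∈ connectedComponentIn G y) :
    MapsTo g (connectedComponentIn G y) (connectedComponentIn G y) := by
  rw [mapsTo_iff_image_subset]
  conv_rhs => rw [connectedComponentIn_eq hgu]
  exact (isPreconnected_connectedComponentIn.image _ hg.continuousOn).subset_connectedComponentIn
    ⟨u, hu, rfl⟩ ((hG.mono_left (connectedComponentIn_subset G y)).image_subset)

theorem exists_period_connectedComponentIn (hf : Continuous f) (hG : MapsTo f G G) {k : ℕ}
    (hk : 0 < k) (hu : u ∈ connectedComponentIn G y) (hku : f^[k] u ∈ connectedComponentIn G y) :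
    ∃ s, 1 ≤ s ∧ MapsTo f^[s] (connectedComponentIn G y) (connectedComponentIn G y) ∧
      ∀ i j, i < j → j < s →
        Disjoint (f^[i] '' connectedComponentIn G y) (f^[j] '' connectedComponentIn G y) := by
  classical
  have hex : ∃ k, 0 < k ∧ ∃ u ∈ connectedComponentIn G y, f^[k] u ∈ connectedComponentIn G y :=
    ⟨k, hk, u, hu, hku⟩
  obtain ⟨hs, v, hv, hsv⟩ := Nat.find_spec hex
  have hmaps := mapsTo_connectedComponentIn (hf.iterate _) (hG.iterate _) hv hsv
  refine ⟨Nat.find hex, hs, hmaps, fun i j hij hjs => disjoint_left.2 ?_⟩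
  rintro _ ⟨a, ha, rfl⟩ ⟨b, hb, hab⟩
  refine Nat.find_min hex (m := Nat.find hex - j + i) (by lia) ⟨by lia, a, ha, ?_⟩
  rw [iterate_add_apply, ← hab, ← iterate_add_apply, Nat.sub_add_cancel hjs.le]
  exact hmaps hb

theorem isArc_of_injOn_real {g : X → ℝ} (hg : Continuous g) (hinj : InjOn g K)
    (hK : IsCompact K) (hc : IsPreconnected K) (hnt : K.Nontrivial) : IsArc K := by
  have hgK : g '' K = Icc (sInf (g '' K)) (sSup (g '' K)) :=
    eq_Icc_of_connected_compact ⟨hnt.nonempty.image g, hc.image g hg.continuousOn⟩ (hK.image hg)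
  have hlt : sInf (g '' K) < sSup (g '' K) := by
    obtain ⟨y, hy, z, hz, hyz⟩ := hgK ▸ hnt.image_of_injOn hinj
    exact lt_of_not_ge fun h => hyz (subsingleton_Icc_of_ge h hy hz)
  have : CompactSpace K := isCompact_iff_compactSpace.1 hK
  have hemb : IsClosedEmbedding (K.domRestrict g) :=
    (hg.comp continuous_subtype_val).isClosedEmbedding (injOn_iff_injective.1 hinj)
  exact ⟨hemb.toHomeomorph.trans ((Homeomorph.setCongr ((range_domRestrict g K).trans hgK)).trans
    (iccHomeoI _ _ hlt))⟩

end PeriodicComponent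

namespace FreeArc

variable {X : Type*} [TopologicalSpace X] (A : FreeArc X) {f : X → X} {x : X} {C D G : Set X}
  {c d p q s : ℝ}

/-! ### The periodic arc -/

theorem subset_image_Ioo (hC : IsPreconnected C) (hs : A.path s ∈ C) (hp : 0 < p) (hps : p < s)
    (hsq : s < q) (hq : q < 1) (hpC : A.path p ∉ C) (hqC : A.path q ∉ C) :
    C ⊆ A.path '' Ioo p q := by
  have hcs : A.coord (A.path s) = s := A.coord_path s ⟨by linarith, by linarith⟩
  intro y hy
  have hpy : p < A.coord y := lt_of_not_ge fun h => hpC <|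
    A.subarc_subset hC hp (hps.trans (hsq.trans hq)) ⟨y, hy, h⟩ ⟨_, hs, hps.le.trans hcs.ge⟩
      ⟨p, left_mem_Icc.2 le_rfl, rfl⟩
  have hyq : A.coord y < q := lt_of_not_ge fun h => hqC <|
    A.subarc_subset hC (hp.trans (hps.trans hsq)) hq ⟨_, hs, hcs.le.trans hsq.le⟩ ⟨y, hy, h⟩
      ⟨q, right_mem_Icc.2 le_rfl, rfl⟩
  exact ⟨_, ⟨hpy, hyq⟩, A.path_coord y ⟨hp.trans hpy, hyq.trans hq⟩⟩

theorem injOn_coord_image (hp : 0 < p) (hq : q < 1) : InjOn A.coord (A.path '' Ioo p q) := by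
  have hcoord {t : ℝ} (ht : t ∈ Ioo p q) : A.coord (A.path t) = t :=
    A.coord_path t ⟨(hp.trans ht.1).le, (ht.2.trans hq).le⟩
  rintro _ ⟨t, ht, rfl⟩ _ ⟨t', ht', rfl⟩ h
  rw [hcoord ht, hcoord ht'] at h
  rw [h]

theorem exists_period_iterate_mem_connectedComponentIn (hf : Continuous f) (hG : MapsTo f G G)
    (hcd : A.subarc c d ⊆ G) (h : (A.limitParams f x ∩ Ioo c d).Nonempty) :
    ∃ s t, 1 ≤ s ∧
      MapsTo f^[s] (connectedComponentIn G (A.path c)) (connectedComponentIn G (A.path c)) ∧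
      (∀ i j, i < j → j < s → Disjoint (f^[i] '' connectedComponentIn G (A.path c))
        (f^[j] '' connectedComponentIn G (A.path c))) ∧
      f^[t] x ∈ connectedComponentIn G (A.path c) := by
  have hlt : c < d := nonempty_Ioo.1 (h.mono inter_subset_right)
  have hsub : A.subarc c d ⊆ connectedComponentIn G (A.path c) :=
    (A.isPreconnected_subarc c d).subset_connectedComponentIn ⟨c, left_mem_Icc.2 hlt.le, rfl⟩ hcd
  have hvisit (N : ℕ) : ∃ t ≥ N, f^[t] x ∈ connectedComponentIn G (A.path c) := by
    obtain ⟨t, ht, s, hs, hst⟩ := A.exists_orbit_param h N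
    exact ⟨t, ht, hsub ⟨s, Ioo_subset_Icc_self hs.1, hst⟩⟩
  obtain ⟨t, -, ht⟩ := hvisit 0
  obtain ⟨t', htt', ht'⟩ := hvisit (t + 1)
  obtain ⟨s, hs, hmaps, hdisj⟩ := exists_period_connectedComponentIn hf hG
    (k := t' - t) (by lia) ht (by rwa [← iterate_add_apply, Nat.sub_add_cancel (by lia)])
  exact ⟨s, t, hs, hmaps, hdisj, ht⟩

variable [CompactSpace X] [T2Space X]

theorem exists_isPeriodicArc_of_invariant (hf : Continuous f) (hD : IsClosed D)
    (hDf : MapsTo f D D) (hp : 0 < p) (hpc : p < c) (hdq : d < q) (hq : q < 1)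
    (hpD : A.path p ∉ D) (hqD : A.path q ∉ D) (hcd : A.subarc c d ⊆ D)
    (h : (A.limitParams f x ∩ Ioo c d).Nonempty) :
    ∃ I s, IsPeriodicArc f I s ∧ omegaLimitSet f x ⊆ arcOrbit f I s := by
  have hlt : c < d := nonempty_Ioo.1 (h.mono inter_subset_right)
  obtain ⟨s, t, hs, hmaps, hdisj, ht⟩ :=
    A.exists_period_iterate_mem_connectedComponentIn hf hDf hcd h
  set I := connectedComponentIn D (A.path c)
  have hID : I ⊆ D := connectedComponentIn_subset _ _
  have hcdI : A.subarc c d ⊆ I :=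
    (A.isPreconnected_subarc c d).subset_connectedComponentIn ⟨c, left_mem_Icc.2 hlt.le, rfl⟩ hcd
  have hcI : A.path c ∈ I := hcdI ⟨c, left_mem_Icc.2 hlt.le, rfl⟩
  have hdI : A.path d ∈ I := hcdI ⟨d, right_mem_Icc.2 hlt.le, rfl⟩
  have hIc : IsCompact I := (isClosed_connectedComponentIn hD _).isCompact
  have hIpq : I ⊆ A.path '' Ioo p q :=
    A.subset_image_Ioo isPreconnected_connectedComponentIn hcI hp hpc (hlt.trans hdq) hq
      (notMem_subset hID hpD) (notMem_subset hID hqD)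
  have hne : A.path c ≠ A.path d := fun h => hlt.ne <|
    A.injOn_path ⟨by linarith, by linarith⟩ ⟨by linarith, by linarith⟩ h
  have harc : IsArc I := isArc_of_injOn_real A.continuous_coord
    ((A.injOn_coord_image hp hq).mono hIpq) hIc isPreconnected_connectedComponentIn
    ⟨_, hcI, _, hdI, hne⟩
  refine ⟨I, s, ⟨harc, hs, hmaps, hdisj⟩, ?_⟩
  rw [← omegaLimitSet_iterate_apply f x t, ← (isClosed_arcOrbit hf hIc s).closure_eq]
  exact omegaLimitSet_subset_closure (mapsTo_arcOrbit hs hmaps) (subset_arcOrbit hs ht)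

/-- Two nested subarcs with separated endpoints are needed: the closure of the component of the
inner forward orbit stays in the outer subarc, so that its orbit still avoids `p` and `q`. -/
theorem exists_isPeriodicArc (hf : Continuous f) (hno : ¬HasHorseshoe f)
    (h : (A.limitParams f x).Infinite) :
    ∃ I s, IsPeriodicArc f I s ∧ omegaLimitSet f x ⊆ arcOrbit f I s := by
  obtain ⟨p, q, hp, hq, hp0, hpq, hq1⟩ := A.exists_periodicPts_infinite_limitParams hf hno le_rfl
    le_rfl (by rwa [inter_eq_left.2 fun τ hτ => hτ.1])
  replace hp0 : 0 < p := nonempty_Ioo.1 (hp0.mono inter_subset_right)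
  replace hq1 : q < 1 := nonempty_Ioo.1 (hq1.mono inter_subset_right)
  obtain ⟨a, b, ha, hb, hpa, hbq, hab, hpG, hqG⟩ :=
    A.exists_infinite_limitParams_notMem_forwardOrbit₂ hf hno hp hq hp0.le hq1.le hpq
  obtain ⟨c, d, -, -, hac, hdb, hcd, haG, hbG⟩ :=
    A.exists_infinite_limitParams_notMem_forwardOrbit₂ hf hno ha hb (hp0.trans hpa).le
      (hbq.trans hq1).le hab
  have hlt : c < d := nonempty_Ioo.1 (hcd.nonempty.mono inter_subset_right)
  have hcdG := subset_forwardOrbit f (A.subarc c d)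
  obtain ⟨s, -, hs, hmaps, -⟩ := A.exists_period_iterate_mem_connectedComponentIn hf
    (mapsTo_forwardOrbit f _) hcdG hcd.nonempty
  set Q := connectedComponentIn (forwardOrbit f (A.subarc c d)) (A.path c)
  have hQG : Q ⊆ forwardOrbit f (A.subarc c d) := connectedComponentIn_subset _ _
  have hcdQ : A.subarc c d ⊆ Q := (A.isPreconnected_subarc c d).subset_connectedComponentIn
    ⟨c, left_mem_Icc.2 hlt.le, rfl⟩ hcdG
  have hQab : Q ⊆ A.path '' Ioo a b :=
    A.subset_image_Ioo isPreconnected_connectedComponentIn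
      (hcdQ ⟨c, left_mem_Icc.2 hlt.le, rfl⟩) (hp0.trans hpa) hac (hlt.trans hdb) (hbq.trans hq1)
      (notMem_subset hQG haG) (notMem_subset hQG hbG)
  have hclQ : closure Q ⊆ A.subarc a b :=
    closure_minimal (hQab.trans (image_mono Ioo_subset_Icc_self)) (A.isClosed_subarc a b)
  have hDG : arcOrbit f (closure Q) s ⊆ forwardOrbit f (A.subarc a b) :=
    arcOrbit_subset (hclQ.trans (subset_forwardOrbit _ _)) (mapsTo_forwardOrbit _ _)
  exact A.exists_isPeriodicArc_of_invariant hf (isClosed_arcOrbit hf isClosed_closure.isCompact s)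
    (mapsTo_arcOrbit hs (hmaps.closure (hf.iterate s))) hp0 (hpa.trans hac) (hdb.trans hbq) hq1
    (notMem_subset hDG hpG) (notMem_subset hDG hqG)
    (hcdQ.trans (subset_closure.trans (subset_arcOrbit hs))) hcd.nonempty

end FreeArc

section ArcParam

variable {X : Type*} [TopologicalSpace X] {A W : Set X} {p : X}

/-- A parametrization of the arc `A` by `[0, 1]` together with its inverse. As in `FreeArc`, the
maps are extended to `ℝ` and `X` to avoid subtypes. -/
structure ArcParam (A : Set X) where
  path : ℝ → X
  coord : X → ℝ
  continuous_path : Continuous path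
  continuousOn_coord : ContinuousOn coord A
  path_mem : ∀ t, path t ∈ A
  coord_mem : ∀ y ∈ A, coord y ∈ Icc (0 : ℝ) 1
  coord_path : ∀ t ∈ Icc (0 : ℝ) 1, coord (path t) = t
  path_coord : ∀ y ∈ A, path (coord y) = y

theorem IsArc.nonempty_arcParam (hA : IsArc A) : Nonempty (ArcParam A) := by
  obtain ⟨φ⟩ := hA
  have hext (y : A) : extend Subtype.val (fun y : A => (φ y : ℝ)) 0 y = φ y :=
    Subtype.val_injective.extend_apply _ _ y
  refine ⟨⟨fun t => φ.symm (projIcc 0 1 zero_le_one t), extend Subtype.val (fun y => (φ y : ℝ)) 0,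
    by fun_prop, ?_, fun t => Subtype.coe_prop _, fun y hy => ?_, fun t ht => ?_, fun y hy => ?_⟩⟩
  · rw [continuousOn_iff_continuous_domRestrict]
    exact (continuous_subtype_val.comp φ.continuous).congr fun y => (hext y).symm
  · rw [hext ⟨y, hy⟩]
    exact Subtype.coe_prop _
  · rw [hext, φ.apply_symm_apply, projIcc_of_mem zero_le_one ht]
  · rw [hext ⟨y, hy⟩, projIcc_val, φ.symm_apply_apply]

theorem IsArc.isCompact (hA : IsArc A) : IsCompact A := by
  obtain ⟨φ⟩ := hA
  exact isCompact_iff_compactSpace.2 φ.symm.compactSpace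

namespace ArcParam

variable (P : ArcParam A)

theorem injOn_path : InjOn P.path (Icc 0 1) := fun s hs t ht hst => by
  rw [← P.coord_path s hs, hst, P.coord_path t ht]

theorem injOn_coord : InjOn P.coord A := fun y hy z hz hyz => by
  rw [← P.path_coord y hy, hyz, P.path_coord z hz]

theorem mem_endpoints_of_isArcEndpoint (hp : IsArcEndpoint A p) :
    p ∈ ({P.path 0, P.path 1} : Set X) := by
  by_contra! hne
  rw [mem_insert_iff, mem_singleton_iff, not_or] at hne
  have hmem (t : ℝ) (ht : t ∈ Icc (0 : ℝ) 1) (hpt : p ≠ P.path t) : t ∈ P.coord '' (A \ {p}) :=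
    ⟨P.path t, ⟨P.path_mem t, hpt.symm⟩, P.coord_path t ht⟩
  have hord := (hp.2.isPreconnected.image P.coord
    (P.continuousOn_coord.mono sdiff_subset)).ordConnected
  obtain ⟨y, ⟨hyA, hyp⟩, hy⟩ := hord.out (hmem 0 (left_mem_Icc.2 zero_le_one) hne.1)
    (hmem 1 (right_mem_Icc.2 zero_le_one) hne.2) (P.coord_mem p hp.1)
  exact hyp (P.injOn_coord hyA hp.1 hy)

theorem infinite_params (h : (W ∩ A).Infinite) : {τ ∈ Ioo (0 : ℝ) 1 | P.path τ ∈ W}.Infinite := by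
  refine (((h.image (P.injOn_coord.mono inter_subset_right))).sdiff
    (toFinite ({0, 1} : Set ℝ))).mono ?_
  rintro _ ⟨⟨y, ⟨hyW, hyA⟩, rfl⟩, hy⟩
  rw [mem_insert_iff, mem_singleton_iff, not_or] at hy
  have hy01 := P.coord_mem y hyA
  exact ⟨⟨hy01.1.lt_of_ne' hy.1, hy01.2.lt_of_ne hy.2⟩, by rwa [P.path_coord y hyA]⟩

end ArcParam

end ArcParam

section ArcJoined

theorem injOn_piecewise_union {ι X : Type*} {B S T : Set ι} [∀ i, Decidable (i ∈ B)]
    {γ δ : ι → X} (hS : S ⊆ B) (hT : T ⊆ Bᶜ) (hγ : InjOn γ S) (hδ : InjOn δ T)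
    (hd : Disjoint (γ '' S) (δ '' T)) : InjOn (B.piecewise γ δ) (S ∪ T) := by
  have hγS : EqOn (B.piecewise γ δ) γ S := (B.piecewise_eqOn γ δ).mono hS
  have hδT : EqOn (B.piecewise γ δ) δ T := (B.piecewise_eqOn_compl γ δ).mono hT
  refine (injOn_union (disjoint_compl_right.mono hS hT)).2
    ⟨hγ.congr hγS.symm, hδ.congr hδT.symm, fun s hs t ht => ?_⟩
  rw [hγS hs, hδT ht]
  exact disjoint_iff_forall_ne.1 hd ⟨s, hs, rfl⟩ ⟨t, ht, rfl⟩

variable {X : Type*} [TopologicalSpace X] {Z Z' A : Set X} {p q m : X}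

theorem continuous_piecewise_Iic {γ δ : ℝ → X} {b : ℝ} (hγ : Continuous γ) (hδ : Continuous δ)
    (h : γ b = δ b) : Continuous ((Iic b).piecewise γ δ) :=
  hγ.if_le hδ continuous_id continuous_const (by rintro t rfl; exact h)

/-- The points `p` and `q` are equal or are joined by an arc inside `Z`. A degenerate parameter
interval stands for the case `p = q`. -/
def ArcJoined (Z : Set X) (p q : X) : Prop :=
  ∃ (γ : ℝ → X) (a b : ℝ), a ≤ b ∧ Continuous γ ∧ InjOn γ (Icc a b) ∧ MapsTo γ (Icc a b) Z ∧
    γ a = p ∧ γ b = q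

namespace ArcJoined

theorem refl (hp : p ∈ Z) : ArcJoined Z p p :=
  ⟨fun _ => p, 0, 0, le_rfl, continuous_const, by simp only [Icc_self, injOn_singleton],
    fun _ _ => hp, rfl, rfl⟩

theorem mono (h : ArcJoined Z p q) (hZ : Z ⊆ Z') : ArcJoined Z' p q := by
  obtain ⟨γ, a, b, hab, hγ, hinj, hmaps, hp, hq⟩ := h
  exact ⟨γ, a, b, hab, hγ, hinj, hmaps.mono_right hZ, hp, hq⟩

theorem right_mem (h : ArcJoined Z p q) : q ∈ Z := by
  obtain ⟨γ, a, b, hab, -, -, hmaps, -, rfl⟩ := h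
  exact hmaps (right_mem_Icc.2 hab)

/-- The first arc is followed only until it meets the second one. -/
theorem trans [T2Space X] (h₁ : ArcJoined Z p m) (h₂ : ArcJoined Z m q) : ArcJoined Z p q := by
  obtain ⟨γ, a, b, hab, hγ, hγi, hγZ, rfl, rfl⟩ := h₁
  obtain ⟨δ, c, d, hcd, hδ, hδi, hδZ, hδc, rfl⟩ := h₂
  have hK : IsCompact (Icc a b ∩ γ ⁻¹' (δ '' Icc c d)) :=
    isCompact_Icc.inter_right ((isCompact_Icc.image hδ).isClosed.preimage hγ)
  obtain ⟨T, ⟨hT, u, hu, huT⟩, hmin⟩ :=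
    hK.exists_isLeast ⟨b, right_mem_Icc.2 hab, c, left_mem_Icc.2 hcd, hδc⟩
  have hTb : Icc a T ⊆ Icc a b := Icc_subset_Icc_right hT.2
  have hshift : MapsTo (fun t => u + (t - T)) (Ioc T (T + (d - u))) (Icc c d) := fun t ht =>
    ⟨by linarith [hu.1, ht.1], by linarith [ht.2]⟩
  have hunion : Icc a (T + (d - u)) = Icc a T ∪ Ioc T (T + (d - u)) :=
    (Icc_union_Ioc_eq_Icc hT.1 (by linarith [hu.2])).symm
  have hsubset : Ioc T (T + (d - u)) ⊆ (Iic T)ᶜ := fun t ht => not_le.2 ht.1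
  have hdisj : Disjoint (γ '' Icc a T) ((fun t => δ (u + (t - T))) '' Ioc T (T + (d - u))) := by
    rw [disjoint_left]
    rintro _ ⟨s, hs, rfl⟩ ⟨t, ht, hst⟩
    obtain rfl : s = T := hs.2.antisymm (hmin ⟨hTb hs, _, hshift ht, hst⟩)
    linarith [ht.1, hδi (hshift ht) hu (hst.trans huT.symm)]
  refine ⟨(Iic T).piecewise γ fun t => δ (u + (t - T)), a, T + (d - u), by linarith [hT.1, hu.2],
    continuous_piecewise_Iic hγ (by fun_prop) (by simp [huT]), ?_, ?_, ?_, ?_⟩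
  · rw [hunion]
    exact injOn_piecewise_union Icc_subset_Iic_self hsubset (hγi.mono hTb)
      (hδi.comp (fun s _ t _ hst => by linarith) hshift) hdisj
  · rw [hunion]
    exact ((hγZ.mono_left hTb).congr ((piecewise_eqOn _ _ _).mono Icc_subset_Iic_self).symm).union
      ((hδZ.comp hshift).congr ((piecewise_eqOn_compl _ _ _).mono hsubset).symm)
  · exact piecewise_eq_of_mem _ _ _ hT.1
  · rcases hu.2.eq_or_lt with rfl | hud
    · simp [huT]
    · rw [piecewise_eq_of_notMem _ _ _ (by simpa using hud), add_sub_cancel_left,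
        add_sub_cancel]

end ArcJoined

theorem ArcParam.arcJoined (P : ArcParam A) (hp : p ∈ A) (hq : q ∈ A) : ArcJoined A p q := by
  rcases eq_or_ne p q with rfl | hpq
  · exact .refl hp
  have hmaps : MapsTo (AffineMap.lineMap (P.coord p) (P.coord q)) (Icc (0 : ℝ) 1) (Icc 0 1) :=
    fun t ht => (convex_Icc (0 : ℝ) 1).lineMap_mem (P.coord_mem p hp) (P.coord_mem q hq) ht
  refine ⟨P.path ∘ AffineMap.lineMap (P.coord p) (P.coord q), 0, 1, zero_le_one,
    P.continuous_path.comp AffineMap.lineMap_continuous, P.injOn_path.comp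
      (AffineMap.lineMap_injective ℝ (P.injOn_coord.ne hp hq hpq)).injOn hmaps,
    fun t _ => P.path_mem _, ?_, ?_⟩
  · rw [comp_apply, AffineMap.lineMap_apply_zero, P.path_coord p hp]
  · rw [comp_apply, AffineMap.lineMap_apply_one, P.path_coord q hq]

theorem exists_isSimpleClosedCurve_of_loop [T2Space X] {η : ℝ → X} {a b : ℝ} (hab : a < b)
    (hη : Continuous η) (hinj : InjOn η (Ico a b)) (hends : η a = η b) :
    ∃ S : Set X, IsSimpleClosedCurve S := by
  obtain ⟨T, rfl⟩ : ∃ T, b = a + T := ⟨b - a, by ring⟩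
  have hT : 0 < T := by linarith
  have : Fact (0 < T) := ⟨hT⟩
  have hcont : Continuous (AddCircle.liftIco T a η) :=
    AddCircle.liftIco_continuous hends hη.continuousOn
  have hinj' : Injective (AddCircle.liftIco T a η) := by
    have hsurj (y : AddCircle T) : y ∈ ((↑) : ℝ → AddCircle T) '' Ico a (a + T) :=
      AddCircle.coe_image_Ico_eq T a ▸ mem_univ y
    intro y z hyz
    obtain ⟨s, hs, rfl⟩ := hsurj y
    obtain ⟨t, ht, rfl⟩ := hsurj z
    rw [AddCircle.liftIco_coe_apply hs, AddCircle.liftIco_coe_apply ht] at hyz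
    rw [hinj hs ht hyz]
  exact ⟨_, ⟨(hcont.isClosedEmbedding hinj').toHomeomorph.symm.trans
    ((AddCircle.homeomorphCircle hT.ne').trans
      (Homeomorph.refl _ : Circle ≃ₜ Metric.sphere (0 : ℂ) 1))⟩⟩

theorem ArcParam.exists_isSimpleClosedCurve [T2Space X] (P : ArcParam A)
    (hZA : Z ∩ A ⊆ {P.path 0, P.path 1}) (h : ArcJoined Z (P.path 0) (P.path 1)) :
    ∃ S : Set X, IsSimpleClosedCurve S := by
  obtain ⟨γ, a, b, hab, hγ, hγi, hγZ, hγa, hγb⟩ := h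
  have hback : MapsTo (fun t => b + 1 - t) (Ioo b (b + 1)) (Ioo (0 : ℝ) 1) := fun t ht =>
    ⟨by linarith [ht.2], by linarith [ht.1]⟩
  have hdisj : Disjoint (γ '' Icc a b) ((fun t => P.path (b + 1 - t)) '' Ioo b (b + 1)) := by
    rw [disjoint_left]
    rintro _ ⟨s, hs, rfl⟩ ⟨t, ht, hst⟩
    have ht01 := hback ht
    rcases hZA ⟨hγZ hs, hst ▸ P.path_mem _⟩ with h0 | h1
    · exact ht01.1.ne' (P.injOn_path (Ioo_subset_Icc_self ht01) (left_mem_Icc.2 zero_le_one)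
        (hst.trans h0))
    · exact ht01.2.ne (P.injOn_path (Ioo_subset_Icc_self ht01) (right_mem_Icc.2 zero_le_one)
        (hst.trans h1))
  refine exists_isSimpleClosedCurve_of_loop
    (η := (Iic b).piecewise γ fun t => P.path (b + 1 - t)) (a := a) (b := b + 1) (by linarith)
    (continuous_piecewise_Iic hγ (P.continuous_path.comp (by fun_prop)) ?_) ?_ ?_
  · rw [hγb, add_sub_cancel_left]
  · rw [← Icc_union_Ioo_eq_Ico hab (by linarith)]
    exact injOn_piecewise_union Icc_subset_Iic_self (fun t ht => not_le.2 ht.1) hγi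
      (P.injOn_path.comp (fun s _ t _ hst => by linarith)
        (hback.mono_right Ioo_subset_Icc_self)) hdisj
  · rw [piecewise_eq_of_mem _ _ _ (mem_Iic.2 hab), piecewise_eq_of_notMem _ _ _ (by simp),
      sub_self, hγa]

end ArcJoined

section ArcComponents

variable {X : Type*} [TopologicalSpace X] {Y : Set X} {𝒞 : Set (Set X)}

theorem isClosed_of_subset_sUnion (h𝒞 : 𝒞.Finite) (hcl : ∀ C ∈ 𝒞, IsClosed C) (hY : Y ⊆ ⋃₀ 𝒞)
    (h : ∀ C ∈ 𝒞, C ⊆ Y ∨ Disjoint C Y) : IsClosed Y := by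
  have hYeq : Y = ⋃₀ {C ∈ 𝒞 | C ⊆ Y} := by
    refine Subset.antisymm (fun y hy => ?_) (sUnion_subset fun C hC => hC.2)
    obtain ⟨C, hC, hyC⟩ := hY hy
    exact ⟨C, ⟨hC, (h C hC).resolve_right fun hd => disjoint_left.1 hd hyC hy⟩, hyC⟩
  rw [hYeq, sUnion_eq_biUnion]
  exact (h𝒞.subset fun C hC => hC.1).isClosed_biUnion fun C hC => hcl C hC.1

theorem subset_or_disjoint_arcJoined [T2Space X] {C : Set X} (hC : C ∈ 𝒞)
    (hjoin : ∀ y ∈ C, ∀ z ∈ C, ArcJoined C y z) (p : X) :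
    C ⊆ {y | ArcJoined (⋃₀ 𝒞) p y} ∨ Disjoint C {y | ArcJoined (⋃₀ 𝒞) p y} := by
  refine or_iff_not_imp_right.2 fun hmeet z hz => ?_
  obtain ⟨y, hyC, hy⟩ := not_disjoint_iff.1 hmeet
  exact hy.trans ((hjoin y hyC z hz).mono (subset_sUnion_of_mem hC))

namespace ArcParam

variable {A Y₀ Y₁ : Set X} (P : ArcParam A)

theorem exists_freeArc_of_isClosed (hA : IsClosed A) (h₀ : IsClosed Y₀) (h₁ : IsClosed Y₁)
    (hd : Disjoint Y₀ Y₁) (hcov : Y₀ ∪ Y₁ ∪ A = univ) (hA₀ : Y₀ ∩ A ⊆ {P.path 0})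
    (hA₁ : Y₁ ∩ A ⊆ {P.path 1}) : ∃ F : FreeArc X, F.path = P.path := by
  classical
  set r : X → ℝ := Y₀.piecewise 0 (Y₁.piecewise 1 P.coord)
  have hr₀ : EqOn r 0 Y₀ := piecewise_eqOn _ _ _
  have hr₁ : EqOn r 1 Y₁ := fun y hy =>
    (piecewise_eq_of_notMem _ _ _ (disjoint_right.1 hd hy)).trans (piecewise_eq_of_mem _ _ _ hy)
  have hrA : EqOn r P.coord A := by
    intro y hy
    by_cases hy₀ : y ∈ Y₀
    · rw [hr₀ hy₀, hA₀ ⟨hy₀, hy⟩, P.coord_path 0 (left_mem_Icc.2 zero_le_one), Pi.zero_apply]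
    by_cases hy₁ : y ∈ Y₁
    · rw [hr₁ hy₁, hA₁ ⟨hy₁, hy⟩, P.coord_path 1 (right_mem_Icc.2 zero_le_one), Pi.one_apply]
    exact (piecewise_eq_of_notMem _ _ _ hy₀).trans (piecewise_eq_of_notMem _ _ _ hy₁)
  have hr : ContinuousOn r (Y₀ ∪ Y₁ ∪ A) :=
    ((continuousOn_const.congr hr₀).union_of_isClosed (continuousOn_const.congr hr₁) h₀ h₁
      ).union_of_isClosed (P.continuousOn_coord.congr hrA) (h₀.union h₁) hA
  refine ⟨⟨P.path, r, P.continuous_path, by rwa [hcov, continuousOn_univ] at hr, fun t ht => ?_,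
    fun y hy => ?_⟩, rfl⟩
  · rw [hrA (P.path_mem t), P.coord_path t ht]
  · rcases hcov.ge (mem_univ y) with (hy₀ | hy₁) | hyA
    · exact absurd (hr₀ hy₀) hy.1.ne'
    · exact absurd (hr₁ hy₁) hy.2.ne
    · rw [hrA hyA, P.path_coord y hyA]

/-- With respect to the rest of the space, `A` joins the part `Y` reachable from its initial point
to its complement; its final point is not in `Y`, as there is no simple closed curve. -/
theorem exists_freeArc [T2Space X] (hS : ∀ S : Set X, ¬IsSimpleClosedCurve S) (hA : IsClosed A)
    (h𝒞 : 𝒞.Finite) (hcl : ∀ C ∈ 𝒞, IsClosed C)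
    (hjoin : ∀ C ∈ 𝒞, ∀ y ∈ C, ∀ z ∈ C, ArcJoined C y z) (hcov : ⋃₀ 𝒞 ∪ A = univ)
    (hends : ⋃₀ 𝒞 ∩ A = {P.path 0, P.path 1}) : ∃ F : FreeArc X, F.path = P.path := by
  set Y := {y | ArcJoined (⋃₀ 𝒞) (P.path 0) y}
  have hY : Y ⊆ ⋃₀ 𝒞 := fun y hy => hy.right_mem
  have h0 : P.path 0 ∈ Y := .refl (hends.ge (mem_insert _ _)).1
  have h1 : P.path 1 ∉ Y := fun h => by
    obtain ⟨S, hcurve⟩ := P.exists_isSimpleClosedCurve hends.le h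
    exact hS S hcurve
  have hdich (C : Set X) (hC : C ∈ 𝒞) : C ⊆ Y ∨ Disjoint C Y :=
    subset_or_disjoint_arcJoined hC (hjoin C hC) _
  have hdich' (C : Set X) (hC : C ∈ 𝒞) : C ⊆ ⋃₀ 𝒞 \ Y ∨ Disjoint C (⋃₀ 𝒞 \ Y) :=
    (hdich C hC).symm.imp (subset_sdiff.2 ⟨subset_sUnion_of_mem hC, ·⟩)
      (disjoint_sdiff_right.mono_left ·)
  refine P.exists_freeArc_of_isClosed hA (isClosed_of_subset_sUnion h𝒞 hcl hY hdich)
    (isClosed_of_subset_sUnion h𝒞 hcl sdiff_subset hdich') disjoint_sdiff_right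
    (by rw [union_sdiff_cancel hY, hcov]) (fun y hy => ?_) (fun y hy => ?_)
  · exact (hends.le ⟨hY hy.1, hy.2⟩).resolve_right fun h => h1 (h ▸ hy.1)
  · exact (hends.le ⟨hy.1.1, hy.2⟩).resolve_left fun h => hy.1.2 (h ▸ h0)

end ArcParam

end ArcComponents

section Forest

variable {X : Type*} [TopologicalSpace X]

/-- `X`, if Hausdorff, is a finite disjoint union of trees. The encoding is that of `IsTree`, but
without a metric and without connectedness; compactness is a consequence. -/
def IsForest (X : Type*) [TopologicalSpace X] : Prop :=
  (∃ 𝒜 : Finset (Set X), (∀ A ∈ 𝒜, IsArc A) ∧ ⋃₀ (𝒜 : Set (Set X)) = univ ∧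
    ∀ A ∈ 𝒜, ∀ B ∈ 𝒜, A ≠ B → ∀ p ∈ A ∩ B, IsArcEndpoint A p ∧ IsArcEndpoint B p) ∧
  ∀ S : Set X, ¬IsSimpleClosedCurve S

theorem IsTree.isForest {X : Type*} [MetricSpace X] (hX : IsTree X) : IsForest X :=
  ⟨hX.2.2.1, hX.2.2.2⟩

namespace IsForest

theorem compactSpace (hX : IsForest X) : CompactSpace X := by
  obtain ⟨⟨𝒜, harc, hcov, -⟩, -⟩ := hX
  exact ⟨hcov ▸ 𝒜.finite_toSet.isCompact_sUnion fun A hA => (harc A hA).isCompact⟩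

theorem exists_freeArc [T2Space X] (hX : IsForest X) {W : Set X} (hW : W.Infinite) :
    ∃ F : FreeArc X, {τ ∈ Ioo (0 : ℝ) 1 | F.path τ ∈ W}.Infinite := by
  obtain ⟨⟨𝒜, harc, hcov, hmeet⟩, hcurve⟩ := hX
  obtain ⟨A, hA, hWA⟩ : ∃ A ∈ 𝒜, (W ∩ A).Infinite := by
    by_contra! hfin
    refine hW ((𝒜.finite_toSet.biUnion hfin).subset fun y hy => ?_)
    obtain ⟨A, hA, hyA⟩ := hcov.ge (mem_univ y)
    exact mem_biUnion hA ⟨hy, hyA⟩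
  obtain ⟨P⟩ := (harc A hA).nonempty_arcParam
  have h𝒜 (B : Set X) (hB : B ∈ 𝒜) : IsClosed B ∧ ∀ y ∈ B, ∀ z ∈ B, ArcJoined B y z := by
    obtain ⟨P'⟩ := (harc B hB).nonempty_arcParam
    exact ⟨(harc B hB).isCompact.isClosed, fun y hy z hz => P'.arcJoined hy hz⟩
  have hpoint (p : X) : IsClosed {p} ∧ ∀ y ∈ ({p} : Set X), ∀ z ∈ ({p} : Set X),
      ArcJoined {p} y z :=
    ⟨isClosed_singleton, by rintro y rfl z rfl; exact .refl (mem_singleton _)⟩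
  set 𝒞 : Set (Set X) := {{P.path 0}, {P.path 1}} ∪ {B | B ∈ 𝒜 ∧ B ≠ A}
  have h𝒞 (C : Set X) (hC : C ∈ 𝒞) : IsClosed C ∧ ∀ y ∈ C, ∀ z ∈ C, ArcJoined C y z := by
    rcases hC with (rfl | rfl) | hC
    exacts [hpoint _, hpoint _, h𝒜 C hC.1]
  have h𝒞A : ⋃₀ 𝒞 ∪ A = univ := eq_univ_of_forall fun y => by
    obtain ⟨B, hB, hyB⟩ := hcov.ge (mem_univ y)
    rcases eq_or_ne B A with rfl | hBA
    exacts [.inr hyB, .inl ⟨B, .inr ⟨hB, hBA⟩, hyB⟩]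
  have hends : ⋃₀ 𝒞 ∩ A = {P.path 0, P.path 1} := by
    rw [sUnion_union, sUnion_pair]
    refine Subset.antisymm ?_ fun y hy =>
      ⟨.inl hy, by rcases hy with rfl | rfl <;> exact P.path_mem _⟩
    rintro y ⟨hy | ⟨B, ⟨hB, hBA⟩, hyB⟩, hyA⟩
    exacts [hy, P.mem_endpoints_of_isArcEndpoint (hmeet A hA B hB hBA.symm y ⟨hyA, hyB⟩).1]
  obtain ⟨F, hF⟩ := P.exists_freeArc hcurve (h𝒜 A hA).1
    ((toFinite _).union (𝒜.finite_toSet.subset fun B hB => hB.1))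
    (fun C hC => (h𝒞 C hC).1) (fun C hC => (h𝒞 C hC).2) h𝒞A hends
  exact ⟨F, hF ▸ P.infinite_params hWA⟩

end IsForest

end Forest

theorem infinite_omegaLimit_subset_arcOrbit_general {X : Type*} [TopologicalSpace X] [T2Space X]
    (hX : IsForest X) {f : X → X} (hf : Continuous f) (hno : ¬HasHorseshoe f) {x : X}
    (hx : (omegaLimitSet f x).Infinite) :
    ∃ I s, IsPeriodicArc f I s ∧ omegaLimitSet f x ⊆ arcOrbit f I s := by
  have : CompactSpace X := hX.compactSpace
  obtain ⟨A, hA⟩ := hX.exists_freeArc hx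
  exact A.exists_isPeriodicArc hf hno hA

/-- For a zero entropy tree map, every infinite ω-limit set is contained in
the orbit of a periodic arc. -/
theorem infinite_omegaLimit_subset_arcOrbit {X : Type*} [MetricSpace X] (hX : IsTree X)
    (f : X → X) (hf : Continuous f) (h0 : topEntropy f = 0) (x : X)
    (hx : (omegaLimitSet f x).Infinite) :
    ∃ (I : Set X) (s : ℕ), IsPeriodicArc f I s ∧ omegaLimitSet f x ⊆ arcOrbit f I s := by
  exact infinite_omegaLimit_subset_arcOrbit_general hX.isForest hf
    (fun h => h.topEntropy_pos.ne' h0) hx
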